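/- arXiv:math/0608249 — 2 statements merged into one kernel-verified Lean document; each statement's English description precedes it below -/
import Mathlib

section
/- Let p, q ≥ 2 be relatively prime integers and let (λ_k)_{k≥1} and (μ_k)_{k≥1} be strictly increasing sequences of positive integers with μ_k ≥ p^{λ_k} for all k. Then the number α = Σ_{k≥1} p^{−λ_k} q^{−μ_k} is normal to base q (Korobov). -/
open Filter MeasureTheory Topology
open scoped Classical

/-- The `(n+1)`-st digit (i.e. `ε_{n+1}`, `0`-indexed by `n`) of the base-`q` expansion of `x`,
chosen as the greedy expansion (never eventually equal to `q - 1`). -/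
noncomputable def qdigit (q : ℕ) (x : ℝ) (n : ℕ) : ℕ :=
  (⌊x * (q : ℝ) ^ (n + 1)⌋).toNat % q

/-- `x` is normal to base `q`: every word `d` of length `m ≥ 1` over `{0, …, q-1}` occurs in the
base-`q` digit sequence of `x` with frequency `q^{-m}`. -/
def IsNormal (q : ℕ) (x : ℝ) : Prop :=
  ∀ m : ℕ, 0 < m → ∀ d : Fin m → ℕ, (∀ i, d i < q) →
    Tendsto
      (fun N : ℕ =>
        (((Finset.range N).filter fun n =>
          ∀ i : Fin m, qdigit q x (n + (i : ℕ)) = d i).card : ℝ) / N)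
      atTop (𝓝 (((q : ℝ) ^ m)⁻¹))

lemma kor_order (p q : ℕ) (hp : 2 ≤ p) (hq : 2 ≤ q) (hcop : Nat.Coprime p q) :
    ∃ K : ℕ, 0 < K ∧ ∀ l d : ℕ, p ^ l ∣ q ^ d - 1 → p ^ l ∣ K * d := by
  set T := Nat.totient (p ^ 2) with hT
  have hTpos : 0 < T := Nat.totient_pos.2 (by positivity)
  obtain ⟨u, hu⟩ : ∃ u, u = q ^ T := ⟨_, rfl⟩
  have hu2 : 2 ≤ u := hu ▸ le_trans hq (Nat.le_self_pow hTpos.ne' q)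
  have hmod : u ≡ 1 [MOD p ^ 2] := hu ▸ Nat.ModEq.pow_totient ((hcop.symm).pow_right 2)
  have hdiv : p ^ 2 ∣ u - 1 := (Nat.modEq_iff_dvd' (by omega)).1 hmod.symm
  refine ⟨u - 1, by omega, fun l d hd => ?_⟩
  rcases Nat.eq_zero_or_pos d with rfl | hdpos
  · simp
  have h1 : p ^ l ∣ u ^ d - 1 := by
    refine hd.trans ?_
    have := Nat.sub_dvd_pow_sub_pow (q ^ d) 1 T
    rwa [one_pow, ← pow_mul, mul_comm d T, pow_mul, ← hu] at this
  rw [Nat.dvd_iff_prime_pow_dvd_dvd]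
  intro r k hr hrk
  rcases Nat.eq_zero_or_pos k with rfl | hk
  · simp
  have hrp : r ∣ p := hr.dvd_of_dvd_pow ((dvd_pow_self r hk.ne').trans hrk)
  have hru : r ^ k ∣ u ^ d - 1 := hrk.trans h1
  have hr1 : r ^ 2 ∣ u - 1 := (pow_dvd_pow_of_dvd hrp 2).trans hdiv
  have hr1' : r ∣ u - 1 := (dvd_pow_self r two_ne_zero).trans hr1
  have hrnu : ¬ r ∣ u := by
    intro h
    have := (Nat.dvd_sub h hr1')
    rw [Nat.sub_sub_self (by omega)] at this
    exact hr.one_lt.ne' (Nat.dvd_one.1 this)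
  have key : emultiplicity r (u ^ d - 1) = emultiplicity r ((u - 1) * d) := by
    rw [emultiplicity_mul hr.prime]
    rcases hr.eq_two_or_odd' with rfl | hodd
    · have := Int.two_pow_sub_pow' (x := (u:ℤ)) (y := 1) d (by
        have : ((2^2 : ℕ) : ℤ) ∣ ((u - 1 : ℕ) : ℤ) := Int.natCast_dvd_natCast.2 hr1
        rw [Nat.cast_sub (by omega)] at this
        exact_mod_cast this) (by exact_mod_cast hrnu)
      rw [← Int.natCast_emultiplicity, ← Int.natCast_emultiplicity 2 (u-1), ← Int.natCast_emultiplicity 2 d, Nat.cast_sub (Nat.one_le_pow d u (by omega)), Nat.cast_sub (show 1 ≤ u by omega)]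
      simpa using this
    · have := Nat.emultiplicity_pow_sub_pow hr hodd (x := u) (y := 1) hr1' hrnu d
      simpa using this
  rw [pow_dvd_iff_le_emultiplicity] at hru ⊢
  rwa [← key]

lemma sum_range_mul_aux (f : ℕ → ℝ) (a Q : ℕ) :
    ∑ w ∈ Finset.range (Q * a), f w = ∑ c ∈ Finset.range a, ∑ b ∈ Finset.range Q, f (Q * c + b) := by
  induction a with
  | zero => simp
  | succ a ih => rw [Finset.sum_range_succ, ← ih, Nat.mul_succ, Finset.sum_range_add]

lemma kor_var (Q D : ℕ) (hQ : 2 ≤ Q) (hD : D < Q) (g : ℕ → ℝ)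
    (hg : ∀ n, g n = (if n % Q = D then 1 else 0) - (Q:ℝ)⁻¹) (L : ℕ) :
    ∑ w ∈ Finset.range (Q ^ L), (∑ j ∈ Finset.range L, g (w / Q ^ j)) ^ 2 ≤ L * (Q:ℝ) ^ L := by
  have hQ0 : (0:ℝ) < Q := by positivity
  have hgb : ∀ n, g n ^ 2 ≤ 1 := by
    intro n
    have h1 : (Q:ℝ)⁻¹ ≤ 1 := inv_le_one_of_one_le₀ (by exact_mod_cast (by omega : 1 ≤ Q))
    have h0 : 0 < (Q:ℝ)⁻¹ := by positivity
    rw [hg]; split_ifs <;> nlinarith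
  have hmod : ∀ c b, b < Q → g (Q * c + b) = g b := by
    intro c b hb; rw [hg, hg]; simp
  have hsum : ∑ b ∈ Finset.range Q, g b = 0 := by
    have : ∀ b ∈ Finset.range Q, g b = (if b = D then (1:ℝ) else 0) - (Q:ℝ)⁻¹ := by
      intro b hb; rw [hg, Nat.mod_eq_of_lt (Finset.mem_range.1 hb)]
    rw [Finset.sum_congr rfl this, Finset.sum_sub_distrib]
    simp [hD, hQ0.ne']
  induction L with
  | zero => simp
  | succ L ih =>
    rw [pow_succ', sum_range_mul_aux]
    have e : ∀ c ∈ Finset.range (Q ^ L), ∑ b ∈ Finset.range Q,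
        (∑ j ∈ Finset.range (L+1), g ((Q * c + b) / Q ^ j)) ^ 2
        ≤ Q * (∑ j ∈ Finset.range L, g (c / Q ^ j)) ^ 2 + Q := by
      intro c _
      set s := ∑ j ∈ Finset.range L, g (c / Q ^ j) with hs
      have e1 : ∀ b ∈ Finset.range Q, (∑ j ∈ Finset.range (L+1), g ((Q * c + b) / Q ^ j)) ^ 2
         ≤ s ^ 2 + 2 * s * g b + 1 := by
        intro b hb
        have hb := Finset.mem_range.1 hb
        rw [Finset.sum_range_succ', pow_zero, Nat.div_one, hmod c b hb]
        have : ∑ j ∈ Finset.range L, g ((Q * c + b) / Q ^ (j+1)) = s := by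
          refine Finset.sum_congr rfl fun j _ => ?_
          rw [pow_succ', ← Nat.div_div_eq_div_mul, Nat.mul_add_div (by omega), Nat.div_eq_of_lt hb, add_zero]
        rw [this]
        nlinarith [hgb b]
      refine (Finset.sum_le_sum e1).trans ?_
      rw [Finset.sum_add_distrib, Finset.sum_add_distrib, ← Finset.mul_sum, hsum]
      simp
    refine (Finset.sum_le_sum e).trans ?_
    rw [Finset.sum_add_distrib, ← Finset.mul_sum]
    simp only [Finset.sum_const, Finset.card_range, nsmul_eq_mul]
    push_cast
    have : (Q:ℝ)^(L+1) = Q * Q^L := by ring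
    nlinarith

lemma kor_shift (f : ℕ → ℝ) (hf : ∀ n, |f n| ≤ 1) (a N : ℕ) :
    |∑ n ∈ Finset.range N, f (n + a) - ∑ n ∈ Finset.range N, f n| ≤ 2 * a := by
  induction a with
  | zero => simp
  | succ a ih =>
    have h1 : ∑ n ∈ Finset.range N, f (n + (a+1)) - ∑ n ∈ Finset.range N, f (n + a) = f (N + a) - f a := by
      have := Finset.sum_range_sub (fun n => f (n + a)) N
      rw [Finset.sum_sub_distrib] at this
      simpa [add_assoc, add_comm, add_left_comm] using this
    have := abs_le.1 ih
    have := abs_le.1 (hf (N+a))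
    have := abs_le.1 (hf a)
    rw [abs_le]; push_cast
    constructor <;> linarith

lemma kor_hotspot (q : ℕ) (hq : 2 ≤ q) (y : ℕ → ℕ) (hy : ∀ n k, y (n + k) / q ^ k = y n)
    (C : ℝ) (hC0 : 0 ≤ C) (hC : ∀ M, ∀ᶠ N : ℕ in atTop, ∀ w < q ^ M,
      (q:ℝ) ^ M * ((Finset.range N).filter fun n => y (n + M) % q ^ M = w).card ≤ C * N)
    (m : ℕ) (hm : 0 < m) (D : ℕ) (hD : D < q ^ m) :
    Tendsto (fun N : ℕ => (((Finset.range N).filter fun n => y (n + m) % q ^ m = D).card : ℝ) / N)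
      atTop (𝓝 (((q : ℝ) ^ m)⁻¹)) := by
  set Q := q ^ m with hQdef
  have hQ : 2 ≤ Q := le_trans hq (Nat.le_self_pow hm.ne' q)
  set g : ℕ → ℝ := fun n => (if n % Q = D then 1 else 0) - (Q:ℝ)⁻¹ with hg
  have hgb : ∀ n, |g n| ≤ 1 := by
    intro n
    have h1 : (Q:ℝ)⁻¹ ≤ 1 := inv_le_one_of_one_le₀ (by exact_mod_cast (by omega : 1 ≤ Q))
    have h0 : 0 < (Q:ℝ)⁻¹ := by positivity
    rw [abs_le]; simp only [hg]; split_ifs <;> constructor <;> linarith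
  set F : ℕ → ℝ := fun N => ∑ n ∈ Finset.range N, g (y (n + m)) with hF
  have hFc : ∀ N, F N = (((Finset.range N).filter fun n => y (n + m) % Q = D).card : ℝ) - N * (Q:ℝ)⁻¹ := by
    intro N
    simp [hF, hg, Finset.sum_sub_distrib]
  have hbound : ∀ L : ℕ, 0 < L → ∀ᶠ N : ℕ in atTop, L * |F N| ≤ N * √(C * L) + L * (2 * (m * L)) := by
    intro L hL
    filter_upwards [hC (m * L)] with N hN
    set S : ℕ → ℝ := fun w => ∑ j ∈ Finset.range L, g (w / Q ^ j) with hS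
    have hQL : q ^ (m * L) = Q ^ L := by rw [hQdef, pow_mul]
    have hSmod : ∀ w, S (w % Q ^ L) = S w := by
      intro w
      refine Finset.sum_congr rfl fun j hj => ?_
      have hj := Finset.mem_range.1 hj
      simp only [hg]
      have : w % Q ^ L / Q ^ j % Q = w / Q ^ j % Q := by
        have e : Q ^ L = Q ^ j * (Q * Q ^ (L - j - 1)) := by
          rw [← pow_succ', ← pow_add]; congr 1; omega
        rw [e, Nat.mod_mul_right_div_self, Nat.mod_mul_right_mod]
      rw [this]
    have hE : ∀ n, S (y (n + m * L)) = ∑ j ∈ Finset.range L, g (y (n + m + m * j)) := by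
      intro n
      rw [← Finset.sum_range_reflect (fun j => g (y (n + m + m * j)))]
      refine Finset.sum_congr rfl fun j hj => ?_
      have hj := Finset.mem_range.1 hj
      congr 1
      rw [hQdef, ← pow_mul, ← hy (n + m + m * (L - 1 - j)) (m * j)]
      congr 2
      obtain ⟨t, rfl⟩ : ∃ t, L = j + 1 + t := ⟨L - j - 1, by omega⟩
      rw [show j + 1 + t - 1 - j = t by omega]; ring
    have hsq : ∑ n ∈ Finset.range N, S (y (n + m * L)) ^ 2 ≤ C * N * L := by
      have h1 : ∑ n ∈ Finset.range N, S (y (n + m * L)) ^ 2 =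
        ∑ w ∈ Finset.range (Q ^ L), ∑ n ∈ (Finset.range N).filter (fun n => y (n + m * L) % Q ^ L = w), S (y (n + m * L)) ^ 2 := by
        rw [Finset.sum_fiberwise_of_maps_to]
        intro n _
        exact Finset.mem_range.2 (Nat.mod_lt _ (by positivity))
      rw [h1]
      have h2 : ∀ w ∈ Finset.range (Q ^ L), ∑ n ∈ (Finset.range N).filter (fun n => y (n + m * L) % Q ^ L = w), S (y (n + m * L)) ^ 2 ≤ (C * N / (Q:ℝ)^L) * S w ^ 2 := by
        intro w hw
        have : ∀ n ∈ (Finset.range N).filter (fun n => y (n + m * L) % Q ^ L = w), S (y (n + m * L)) ^ 2 = S w ^ 2 := by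
          intro n hn
          rw [← (Finset.mem_filter.1 hn).2, hSmod]
        rw [Finset.sum_congr rfl this, Finset.sum_const, nsmul_eq_mul]
        refine mul_le_mul_of_nonneg_right ?_ (sq_nonneg _)
        rw [le_div_iff₀ (by positivity), mul_comm]
        have := hN w (by rw [hQL]; exact Finset.mem_range.1 hw)
        rw [hQL] at this
        rw [← Nat.cast_pow, hQL] at this
        exact_mod_cast this
      refine (Finset.sum_le_sum h2).trans ?_
      rw [← Finset.mul_sum]
      have h3 := kor_var Q D hQ hD g (fun n => rfl) L
      refine (mul_le_mul_of_nonneg_left h3 (by positivity)).trans (le_of_eq ?_)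
      field_simp
    have hsum : |∑ n ∈ Finset.range N, S (y (n + m * L))| ≤ N * √(C * L) := by
      refine abs_le_of_sq_le_sq ?_ (by positivity)
      have := sq_sum_le_card_mul_sum_sq (s := Finset.range N) (f := fun n => S (y (n + m * L)))
      rw [Finset.card_range] at this
      rw [mul_pow, Real.sq_sqrt (by positivity)]
      refine this.trans ((mul_le_mul_of_nonneg_left hsq (by positivity)).trans (le_of_eq ?_))
      ring
    have hdiff : |∑ n ∈ Finset.range N, S (y (n + m * L)) - L * F N| ≤ L * (2 * (m * L)) := by
      have : ∑ n ∈ Finset.range N, S (y (n + m * L)) - L * F N =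
         ∑ j ∈ Finset.range L, (∑ n ∈ Finset.range N, g (y (n + m * j + m)) - F N) := by
        rw [Finset.sum_sub_distrib, Finset.sum_comm (s := Finset.range L)]
        simp only [hE, Finset.sum_const, Finset.card_range, nsmul_eq_mul]
        congr 1
        refine Finset.sum_congr rfl fun n _ => Finset.sum_congr rfl fun j _ => ?_
        rw [add_right_comm]
      rw [this]
      refine (Finset.abs_sum_le_sum_abs _ _).trans ?_
      have h4 : ∀ j ∈ Finset.range L, |∑ n ∈ Finset.range N, g (y (n + m * j + m)) - F N| ≤ 2 * (m * L) := by
        intro j hj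
        refine (kor_shift (fun n => g (y (n + m))) (fun n => hgb _) (m * j) N).trans ?_
        have : j ≤ L := (Finset.mem_range.1 hj).le
        push_cast
        gcongr
      refine (Finset.sum_le_sum h4).trans ?_
      simp
    have a1 := abs_le.1 hsum
    have a2 := abs_le.1 hdiff
    have : (L:ℝ) * |F N| = |L * F N| := by rw [abs_mul, Nat.abs_cast]
    rw [this, abs_le]
    constructor <;> linarith
  rw [Metric.tendsto_atTop']
  intro ε hε
  obtain ⟨L, hL⟩ := exists_nat_gt (4 * C / ε ^ 2)
  have hL0 : 0 < L + 1 := by omega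
  obtain ⟨N1, hN1⟩ := eventually_atTop.1 (hbound (L + 1) hL0)
  obtain ⟨N2, hN2⟩ := exists_nat_gt (2 * (2 * (m * (L + 1))) / ε)
  refine ⟨max N1 N2, fun N hN => ?_⟩
  have hNa : N1 ≤ N := by omega
  have hNb : N2 < N := by omega
  have hNpos : (0:ℝ) < N := by exact_mod_cast (by omega : 0 < N)
  have h := hN1 N hNa
  have hs : √(C * ((L + 1 : ℕ):ℝ)) ≤ ε / 2 * (L + 1 : ℕ) := by
    refine Real.sqrt_le_iff.2 ⟨by positivity, ?_⟩
    rw [div_lt_iff₀ (by positivity)] at hL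
    push_cast
    have : (0:ℝ) ≤ L := by positivity
    nlinarith [mul_pos hε hε]
  have hb : 2 * (m * ((L + 1 : ℕ):ℝ)) < ε / 2 * N := by
    have : (N2:ℝ) < N := by exact_mod_cast hNb
    rw [div_lt_iff₀ hε] at hN2
    push_cast
    nlinarith
  have hlt : |F N| < ε * N := by
    have hLp : (0:ℝ) < (L + 1 : ℕ) := by positivity
    refine lt_of_mul_lt_mul_left (a := ((L + 1 : ℕ):ℝ)) ?_ hLp.le
    calc _ ≤ _ := h
      _ < N * (ε / 2 * (L + 1 : ℕ)) + (L + 1 : ℕ) * (ε / 2 * N) :=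
        add_lt_add_of_le_of_lt (mul_le_mul_of_nonneg_left hs hNpos.le) (mul_lt_mul_of_pos_left hb hLp)
      _ = _ := by ring
  rw [Real.dist_eq]
  have : (((Finset.range N).filter fun n => y (n + m) % Q = D).card : ℝ) / N - ((q:ℝ)^m)⁻¹ = F N / N := by
    rw [hFc, hQdef]; push_cast; field_simp
  rw [this, abs_div, abs_of_pos hNpos, div_lt_iff₀ hNpos]
  exact hlt

lemma kor_word (q : ℕ) (hq : 2 ≤ q) (m : ℕ) (d : ℕ → ℕ) (hd : ∀ i < m, d i < q) :
    ∃ D < q ^ m, ∀ Y : ℕ, (Y % q ^ m = D ↔ ∀ i < m, Y / q ^ (m - 1 - i) % q = d i) := by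
  induction m with
  | zero => exact ⟨0, by simp, fun Y => by simp [Nat.mod_one]⟩
  | succ m ih =>
    obtain ⟨D, hD, h⟩ := ih fun i hi => hd i (by omega)
    have hdm := hd m (by omega)
    refine ⟨d m + q * D, ?_, fun Y => ?_⟩
    · rw [pow_succ']; nlinarith
    · have e : Y % q ^ (m+1) = d m + q * D ↔ Y % q = d m ∧ (Y / q) % q ^ m = D := by
        rw [pow_succ', Nat.mod_mul]
        constructor
        · intro hh
          have h1 := congrArg (· % q) hh
          simp [Nat.mod_eq_of_lt hdm] at h1
          refine ⟨h1, ?_⟩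
          rw [h1] at hh
          exact Nat.eq_of_mul_eq_mul_left (by omega : 0 < q) (Nat.add_left_cancel hh)
        · rintro ⟨h1, h2⟩; rw [h1, h2]
      rw [e, h]
      constructor
      · rintro ⟨h1, h2⟩ i hi
        rcases Nat.lt_succ_iff_lt_or_eq.1 hi with hi' | rfl
        · have := h2 i hi'
          rw [Nat.div_div_eq_div_mul, ← pow_succ'] at this
          rwa [show m + 1 - 1 - i = m - 1 - i + 1 by omega]
        · simpa using h1
      · intro hh
        refine ⟨by simpa using hh m (by omega), fun i hi => ?_⟩
        have := hh i (by omega)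
        rw [Nat.div_div_eq_div_mul, ← pow_succ']
        rwa [show m + 1 - 1 - i = m - 1 - i + 1 by omega] at this

lemma kor_count (P Q K w s g : ℕ) (hQ : 0 < Q) (hPQ : Q ≤ P) (hK : 0 < K) (hw : w < Q)
    (y B : ℕ → ℕ) (h1 : ∀ n ∈ Finset.Ico s (s + g), Q * B n < P * (y n + 1))
    (h2 : ∀ n ∈ Finset.Ico s (s + g), P * y n < Q * (B n + 1))
    (hinj : ∀ a ∈ Finset.Ico s (s + g), ∀ b ∈ Finset.Ico s (s + g), a < b →
      B a % P = B b % P → P ≤ K * (b - a)) :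
    Q * ((Finset.Ico s (s + g)).filter fun n => y n % Q = w).card ≤ 3 * K * g + 3 * P := by
  have hP : 0 < P := by omega
  -- window length
  obtain ⟨τ, hτ1, hτ2, hτ0⟩ : ∃ τ, P ≤ K * τ ∧ (∀ t, t < τ → K * t < P) ∧ 0 < τ := by
    refine ⟨(P - 1) / K + 1, ?_, ?_, Nat.succ_pos _⟩
    · have := Nat.lt_mul_div_succ (P - 1) hK
      omega
    · intro t ht
      have : K * t ≤ P - 1 := by
        rw [mul_comm]; exact (Nat.le_div_iff_mul_le hK).1 (by omega)
      omega
  have hsub : ((Finset.Ico s (s + g)).filter fun n => y n % Q = w).card ≤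
      (Finset.Icc (P * w / Q) (P * (w + 1) / Q) ×ˢ Finset.range (g / τ + 1)).card := by
    refine Finset.card_le_card_of_injOn (fun n => (B n % P, (n - s) / τ)) ?_ ?_
    · intro n hn
      obtain ⟨hn, hyw⟩ := Finset.mem_filter.1 hn
      have a1 := h1 n hn
      have a2 := h2 n hn
      have hdm := Nat.div_add_mod (y n) Q
      rw [hyw] at hdm
      set z := y n / Q
      have hBz1 : B n < P * (z + 1) := by
        refine Nat.lt_of_mul_lt_mul_left (a := Q) (lt_of_lt_of_le a1 ?_)
        have : y n + 1 ≤ Q * (z + 1) := by rw [mul_add]; omega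
        calc _ ≤ P * (Q * (z + 1)) := Nat.mul_le_mul_left _ this
          _ = _ := by ring
      have hBz2 : P * z ≤ B n := by
        refine Nat.lt_succ_iff.1 (Nat.lt_of_mul_lt_mul_left (a := Q) (lt_of_le_of_lt ?_ a2))
        calc Q * (P * z) = P * (Q * z) := by ring
          _ ≤ _ := Nat.mul_le_mul_left _ (by omega)
      obtain ⟨r, hr⟩ := Nat.exists_eq_add_of_le hBz2
      have hrP : r < P := by rw [mul_add] at hBz1; omega
      have hmod : B n % P = r := by rw [hr, Nat.mul_add_mod, Nat.mod_eq_of_lt hrP]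
      rw [hr, ← hdm] at a1 a2
      have hIn := Finset.mem_Ico.1 hn
      refine Finset.mem_coe.2 (Finset.mem_product.2 ⟨Finset.mem_Icc.2 ⟨?_, ?_⟩, Finset.mem_range.2 ?_⟩)
      · simp only [hmod]
        refine Nat.lt_succ_iff.1 ((Nat.div_lt_iff_lt_mul hQ).2 ?_)
        nlinarith
      · simp only [hmod]
        refine (Nat.le_div_iff_mul_le hQ).2 ?_
        nlinarith
      · refine Nat.lt_succ_iff.2 (Nat.div_le_div_right ?_)
        omega
    · have key : ∀ a ∈ Finset.Ico s (s + g), ∀ b ∈ Finset.Ico s (s + g), a < b →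
          B a % P = B b % P → (a - s) / τ ≠ (b - s) / τ := by
        intro a ha b hb hab hB hdiv
        have h := hinj a ha b hb hab hB
        have hlt : b - a < τ := by
          have e1 := Nat.div_add_mod (a - s) τ
          have e2 := Nat.div_add_mod (b - s) τ
          have e3 := Nat.mod_lt (b - s) hτ0
          rw [hdiv] at e1
          have := (Finset.mem_Ico.1 ha).1
          omega
        have := hτ2 _ hlt
        omega
      intro a ha b hb hab
      have ha := (Finset.mem_filter.1 (Finset.mem_coe.1 ha)).1
      have hb := (Finset.mem_filter.1 (Finset.mem_coe.1 hb)).1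
      simp only [Prod.mk.injEq] at hab
      rcases lt_trichotomy a b with h | h | h
      · exact absurd hab.2 (key a ha b hb h hab.1)
      · exact h
      · exact absurd hab.2.symm (key b hb a ha h hab.1.symm)
  rw [Finset.card_product, Nat.card_Icc, Finset.card_range] at hsub
  have hc : Q * (P * (w + 1) / Q + 1 - P * w / Q) ≤ 3 * P := by
    have e1 := Nat.div_mul_le_self (P * (w + 1)) Q
    have e2 := Nat.lt_mul_div_succ (P * w) hQ
    have hle : P * w / Q ≤ P * (w + 1) / Q := Nat.div_le_div_right (Nat.mul_le_mul_left _ (by omega))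
    obtain ⟨t, ht⟩ := Nat.exists_eq_add_of_le hle
    rw [show P * (w + 1) / Q + 1 - P * w / Q = t + 1 by omega]
    rw [ht] at e1
    nlinarith
  calc _ ≤ Q * ((P * (w + 1) / Q + 1 - P * w / Q) * (g / τ + 1)) := Nat.mul_le_mul_left _ hsub
    _ = (Q * (P * (w + 1) / Q + 1 - P * w / Q)) * (g / τ + 1) := by ring
    _ ≤ 3 * P * (g / τ + 1) := Nat.mul_le_mul_right _ hc
    _ = 3 * (P * (g / τ)) + 3 * P := by ring
    _ ≤ 3 * (K * g) + 3 * P := by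
      have : P * (g / τ) ≤ K * g := by
        calc _ ≤ K * τ * (g / τ) := Nat.mul_le_mul_right _ hτ1
          _ = K * (τ * (g / τ)) := by ring
          _ ≤ _ := Nat.mul_le_mul_left _ (Nat.mul_div_le g τ)
      omega
    _ = _ := by ring

lemma kor_block (p q : ℕ) (hp : 2 ≤ p) (hq : 2 ≤ q)
    (lam mu : ℕ → ℕ) (hlam : StrictMono lam) (hmu : StrictMono mu) (k : ℕ) :
    ∃ A : ℕ, Nat.Coprime A p ∧ ∀ n, mu k ≤ n → n < mu (k + 1) →
      ((A * q ^ (n - mu k) : ℕ) : ℝ) ≤ (p:ℝ) ^ lam k *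
        ((∑' k : ℕ, ((p : ℝ) ^ lam k)⁻¹ * ((q : ℝ) ^ mu k)⁻¹) * (q:ℝ) ^ n) ∧
      (p:ℝ) ^ lam k * ((∑' k : ℕ, ((p : ℝ) ^ lam k)⁻¹ * ((q : ℝ) ^ mu k)⁻¹) * (q:ℝ) ^ n) <
        ((A * q ^ (n - mu k) : ℕ) : ℝ) + 1 := by
  have hp0 : (0:ℝ) < p := by exact_mod_cast (by omega : 0 < p)
  have hq0 : (0:ℝ) < q := by exact_mod_cast (by omega : 0 < q)
  have hp2 : (2:ℝ) ≤ p := by exact_mod_cast hp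
  have hq2 : (2:ℝ) ≤ q := by exact_mod_cast hq
  set a : ℕ → ℝ := fun k => ((p : ℝ) ^ lam k)⁻¹ * ((q : ℝ) ^ mu k)⁻¹ with ha
  have hapos : ∀ i, 0 ≤ a i := fun i => by positivity
  -- bound on the tail terms
  have hgrow : ∀ j i, mu j + i ≤ mu (i + j) := by
    intro j i
    induction i with
    | zero => simp
    | succ i ih =>
      have := hmu (show i + j < i + 1 + j by omega)
      omega
  have hterm : ∀ i, a (i + (k + 1)) ≤
      (((p:ℝ) ^ lam k)⁻¹ * ((q:ℝ) ^ mu (k+1))⁻¹ * (1/2)) * (1/2) ^ i := by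
    intro i
    have e1 : (p:ℝ) ^ lam k * 2 ≤ (p:ℝ) ^ lam (i + (k + 1)) := by
      calc (p:ℝ) ^ lam k * 2 ≤ (p:ℝ) ^ lam k * p := by gcongr
        _ = (p:ℝ) ^ (lam k + 1) := by ring
        _ ≤ _ := pow_le_pow_right₀ (by linarith) (hlam (show k < i + (k+1) by omega))
    have e2 : (q:ℝ) ^ mu (k+1) * 2 ^ i ≤ (q:ℝ) ^ mu (i + (k + 1)) := by
      calc (q:ℝ) ^ mu (k+1) * 2 ^ i ≤ (q:ℝ) ^ mu (k+1) * q ^ i := by gcongr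
        _ = (q:ℝ) ^ (mu (k+1) + i) := by ring
        _ ≤ _ := pow_le_pow_right₀ (by linarith) (hgrow _ _)
    calc a (i + (k + 1)) ≤ ((p:ℝ) ^ lam k * 2)⁻¹ * ((q:ℝ) ^ mu (k+1) * 2 ^ i)⁻¹ := by
          simp only [ha]; gcongr
      _ = _ := by rw [mul_inv, mul_inv, one_div, inv_pow]; ring
  have hgeo : Summable fun i : ℕ => (((p:ℝ) ^ lam k)⁻¹ * ((q:ℝ) ^ mu (k+1))⁻¹ * (1/2)) * (1/2) ^ i :=
    summable_geometric_two.mul_left _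
  have hsumtail : Summable fun i => a (i + (k + 1)) :=
    Summable.of_nonneg_of_le (fun i => hapos _) hterm hgeo
  have hsum : Summable a := (summable_nat_add_iff (k+1)).1 hsumtail
  have htail : ∑' i, a (i + (k + 1)) ≤ ((p:ℝ) ^ lam k)⁻¹ * ((q:ℝ) ^ mu (k+1))⁻¹ := by
    refine (hsumtail.tsum_le_tsum hterm hgeo).trans (le_of_eq ?_)
    rw [tsum_mul_left, tsum_geometric_two]; ring
  have htail0 : 0 ≤ ∑' i, a (i + (k + 1)) := tsum_nonneg fun i => hapos _
  have hpart : ∀ k, ∃ A : ℕ, Nat.Coprime A p ∧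
      ∑ i ∈ Finset.range (k + 1), a i = A * (((p : ℝ) ^ lam k)⁻¹ * ((q : ℝ) ^ mu k)⁻¹) := by
    intro k
    induction k with
    | zero => exact ⟨1, by simp, by simp [ha]⟩
    | succ k ih =>
      obtain ⟨A, hA, hs⟩ := ih
      obtain ⟨u, hu⟩ := Nat.exists_eq_add_of_lt (hlam (Nat.lt_succ_self k))
      obtain ⟨v, hv⟩ := Nat.exists_eq_add_of_lt (hmu (Nat.lt_succ_self k))
      simp only [Nat.succ_eq_add_one] at hu hv
      refine ⟨1 + A * p ^ u * q ^ (v + 1) * p, ?_, ?_⟩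
      · simp
      · rw [Finset.sum_range_succ, hs]
        simp only [ha]
        rw [hu, hv]
        push_cast
        simp only [pow_add, pow_one]
        field_simp
        ring
  obtain ⟨A, hA, hs⟩ := hpart k
  refine ⟨A, hA, fun n hn1 hn2 => ?_⟩
  rw [← hsum.sum_add_tsum_nat_add (k + 1), hs]
  set t := ∑' i, a (i + (k + 1))
  obtain ⟨v, rfl⟩ := Nat.exists_eq_add_of_le hn1
  have e : (p:ℝ) ^ lam k * ((A * (((p : ℝ) ^ lam k)⁻¹ * ((q : ℝ) ^ mu k)⁻¹) + t) * (q:ℝ) ^ (mu k + v))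
      = A * (q:ℝ) ^ v + (p:ℝ) ^ lam k * t * (q:ℝ) ^ (mu k + v) := by
    rw [pow_add]; field_simp
  rw [e, Nat.add_sub_cancel_left]
  push_cast
  constructor
  · have : 0 ≤ (p:ℝ) ^ lam k * t * (q:ℝ) ^ (mu k + v) := by positivity
    linarith
  · have : (p:ℝ) ^ lam k * t * (q:ℝ) ^ (mu k + v) < 1 := by
      calc _ ≤ (p:ℝ) ^ lam k * (((p:ℝ) ^ lam k)⁻¹ * ((q:ℝ) ^ mu (k+1))⁻¹) * (q:ℝ) ^ (mu k + v) := by gcongr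
        _ = (q:ℝ) ^ (mu k + v) / (q:ℝ) ^ mu (k+1) := by field_simp
        _ < 1 := by
          rw [div_lt_one (by positivity)]
          exact pow_lt_pow_right₀ (by linarith) hn2
    linarith

/-- **Korobov**: if `p, q ≥ 2` are coprime, `(λ_k)` and `(μ_k)` are strictly increasing
sequences of positive integers with `μ_k ≥ p^{λ_k}`, then `α = ∑_k p^{-λ_k} q^{-μ_k}` is
normal to base `q`. -/
theorem korobov_normal (p q : ℕ) (hp : 2 ≤ p) (hq : 2 ≤ q) (hcop : Nat.Coprime p q)
    (lam mu : ℕ → ℕ) (hlam : StrictMono lam) (hmu : StrictMono mu)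
    (hlam1 : ∀ k, 1 ≤ lam k) (hmu1 : ∀ k, 1 ≤ mu k)
    (hge : ∀ k, p ^ lam k ≤ mu k) :
    IsNormal q (∑' k : ℕ, ((p : ℝ) ^ lam k)⁻¹ * ((q : ℝ) ^ mu k)⁻¹) := by
  have hq0 : (0:ℝ) < q := by exact_mod_cast (by omega : 0 < q)
  have hblock := kor_block p q hp hq lam mu hlam hmu
  have hα0 : 0 ≤ ∑' k : ℕ, ((p : ℝ) ^ lam k)⁻¹ * ((q : ℝ) ^ mu k)⁻¹ :=
    tsum_nonneg fun k => by positivity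
  generalize (∑' k : ℕ, ((p : ℝ) ^ lam k)⁻¹ * ((q : ℝ) ^ mu k)⁻¹) = α at hblock hα0
  set y : ℕ → ℕ := fun n => ⌊α * (q:ℝ) ^ n⌋₊ with hydef
  have hy : ∀ n k, y (n + k) / q ^ k = y n := by
    intro n k
    simp only [hydef]
    rw [← Nat.floor_div_natCast]
    congr 1
    push_cast
    rw [pow_add]; field_simp
  obtain ⟨K, hK, hord⟩ := kor_order p q hp hq hcop
  -- the frequency bound
  have hfreq : ∀ M, ∀ᶠ N : ℕ in atTop, ∀ w < q ^ M,
      (q:ℝ) ^ M * ((Finset.range N).filter fun n => y (n + M) % q ^ M = w).card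
        ≤ ((3 * K + 7 : ℕ) : ℝ) * N := by
    intro M
    set Q := q ^ M with hQdef
    have hQ : 0 < Q := by positivity
    have hstep : ∀ k, Q ≤ p ^ lam k → ∀ w < Q, ∀ g, mu k + g ≤ mu (k + 1) →
        Q * ((Finset.Ico (mu k) (mu k + g)).filter fun n => y (n + M) % Q = w).card
          ≤ 3 * K * g + 3 * p ^ lam k := by
      intro k hk w hw g hg
      obtain ⟨A, hA, hAn⟩ := hblock k
      refine kor_count (p ^ lam k) Q K w (mu k) g hQ hk hK hw (fun n => y (n + M))
        (fun n => A * q ^ (n - mu k)) ?_ ?_ ?_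
      · intro n hn
        obtain ⟨hn1, hn2⟩ := Finset.mem_Ico.1 hn
        have h1 := (hAn n hn1 (by omega)).1
        have h2 := Nat.lt_floor_add_one (α * (q:ℝ) ^ (n + M))
        have : ((Q * (A * q ^ (n - mu k)) : ℕ) : ℝ) < ((p ^ lam k * (y (n + M) + 1) : ℕ) : ℝ) := by
          rw [Nat.cast_mul, Nat.cast_mul (p ^ lam k)]
          calc (Q:ℝ) * ((A * q ^ (n - mu k) : ℕ) : ℝ) ≤ Q * ((p:ℝ) ^ lam k * (α * (q:ℝ) ^ n)) := by gcongr
            _ = (p:ℝ) ^ lam k * (α * (q:ℝ) ^ (n + M)) := by rw [hQdef]; push_cast; ring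
            _ < _ := by
              push_cast
              exact mul_lt_mul_of_pos_left h2 (by positivity)
        exact_mod_cast this
      · intro n hn
        obtain ⟨hn1, hn2⟩ := Finset.mem_Ico.1 hn
        have h1 := (hAn n hn1 (by omega)).2
        have h2 := Nat.floor_le (show 0 ≤ α * (q:ℝ) ^ (n + M) by positivity)
        have : ((p ^ lam k * y (n + M) : ℕ) : ℝ) < ((Q * (A * q ^ (n - mu k) + 1) : ℕ) : ℝ) := by
          rw [Nat.cast_mul, Nat.cast_mul Q, Nat.cast_add_one]
          calc ((p ^ lam k : ℕ):ℝ) * (y (n + M) : ℝ) ≤ ((p ^ lam k : ℕ):ℝ) * (α * (q:ℝ) ^ (n + M)) := by gcongr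
            _ = Q * ((p:ℝ) ^ lam k * (α * (q:ℝ) ^ n)) := by rw [hQdef]; push_cast; ring
            _ < _ := mul_lt_mul_of_pos_left h1 (by exact_mod_cast hQ)
        exact_mod_cast this
      · intro a ha b hb hab hmod
        obtain ⟨ha1, ha2⟩ := Finset.mem_Ico.1 ha
        obtain ⟨c, rfl⟩ := Nat.exists_eq_add_of_le hab.le
        have hmod' : A * q ^ (a - mu k) * 1 ≡ A * q ^ (a - mu k) * q ^ c [MOD p ^ lam k] := by
          have e : A * q ^ (a - mu k) * q ^ c = A * q ^ (a + c - mu k) := by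
            rw [mul_assoc, ← pow_add]; congr 2; omega
          rw [mul_one, e]; exact hmod
        have hcp : Nat.gcd (p ^ lam k) (A * q ^ (a - mu k)) = 1 :=
          Nat.Coprime.pow_left _ (Nat.Coprime.mul_right hA.symm (hcop.pow_right _))
        have h3 := Nat.ModEq.cancel_left_of_coprime hcp hmod'
        have h4 := (Nat.modEq_iff_dvd' (Nat.one_le_pow _ _ (by omega))).1 h3
        rw [Nat.add_sub_cancel_left]
        exact Nat.le_of_dvd (Nat.mul_pos hK (by omega)) (hord _ _ h4)
    -- choose the first block
    have hk0 : Q ≤ p ^ lam Q := 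
      ((Nat.lt_pow_self (by omega : 1 < p)).le).trans (Nat.pow_le_pow_right (by omega) hlam.le_apply)
    have hcard : ∀ w s g, ((Finset.range (s + g)).filter fun n => y (n + M) % Q = w).card
        ≤ ((Finset.range s).filter fun n => y (n + M) % Q = w).card +
          ((Finset.Ico s (s + g)).filter fun n => y (n + M) % Q = w).card := by
      intro w s g
      refine le_trans (Finset.card_le_card ?_) (Finset.card_union_le _ _)
      intro n
      simp only [Finset.mem_filter, Finset.mem_union, Finset.mem_range, Finset.mem_Ico]
      omega
    have hind : ∀ j, ∀ w < Q, Q * ((Finset.range (mu (Q + j))).filter fun n => y (n + M) % Q = w).card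
        ≤ Q * mu Q + 3 * K * mu (Q + j) + 3 * p ^ lam (Q + j) ∧ Q ≤ p ^ lam (Q + j) := by
      intro j w hw
      induction j with
      | zero =>
        refine ⟨?_, hk0⟩
        have := (Finset.card_filter_le (Finset.range (mu Q)) fun n => y (n + M) % Q = w)
        rw [Finset.card_range] at this
        have := Nat.mul_le_mul_left Q this
        simp only [add_zero]
        omega
      | succ j ih =>
        obtain ⟨ih1, ih2⟩ := ih
        have hl : lam (Q + j) + 1 ≤ lam (Q + (j + 1)) := hlam (by omega)
        have hpp : 2 * p ^ lam (Q + j) ≤ p ^ lam (Q + (j + 1)) := by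
          calc 2 * p ^ lam (Q + j) ≤ p * p ^ lam (Q + j) := Nat.mul_le_mul_right _ hp
            _ = p ^ (lam (Q + j) + 1) := by ring
            _ ≤ _ := Nat.pow_le_pow_right (by omega) hl
        refine ⟨?_, by omega⟩
        obtain ⟨g, hg⟩ := Nat.exists_eq_add_of_le (hmu (show Q + j < Q + (j + 1) by omega)).le
        have h1 := hstep (Q + j) ih2 w hw g (by rw [← hg, add_assoc])
        have h2 := Nat.mul_le_mul_left Q (hcard w (mu (Q + j)) g)
        rw [hg]
        rw [mul_add] at h2
        have : 3 * K * (mu (Q + j) + g) = 3 * K * mu (Q + j) + 3 * K * g := by ring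
        omega
    filter_upwards [eventually_ge_atTop (Q * mu Q)] with N hN w hw
    have hNmu : mu Q ≤ N := le_trans (Nat.le_mul_of_pos_left _ hQ) hN
    -- find the block of N
    obtain ⟨j, hj1, hj2⟩ : ∃ j, mu (Q + j) ≤ N ∧ N < mu (Q + (j + 1)) := by
      have hex : ∃ i, N < mu (Q + i) := ⟨N + 1, lt_of_lt_of_le (by omega) hmu.le_apply⟩
      have hs := Nat.find_spec hex
      have hne : Nat.find hex ≠ 0 := by
        intro h0; rw [h0] at hs; simp at hs; omega
      obtain ⟨i, hi⟩ := Nat.exists_eq_succ_of_ne_zero hne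
      refine ⟨i, ?_, by rw [hi] at hs; exact hs⟩
      exact not_lt.1 (Nat.find_min hex (by omega))
    obtain ⟨g, rfl⟩ := Nat.exists_eq_add_of_le hj1
    obtain ⟨i1, i2⟩ := hind j w hw
    have h1 := hstep (Q + j) i2 w hw g (by rw [add_assoc]; omega)
    have h2 := Nat.mul_le_mul_left Q (hcard w (mu (Q + j)) g)
    rw [mul_add] at h2
    have h3 := hge (Q + j)
    have h4 : (3 * K + 7) * (mu (Q + j) + g) =
      3 * K * mu (Q + j) + 3 * K * g + 7 * (mu (Q + j) + g) := by ring
    have h5 : Q * ((Finset.range (mu (Q + j) + g)).filter fun n => y (n + M) % Q = w).card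
        ≤ (3 * K + 7) * (mu (Q + j) + g) := by omega
    have h6 : ((Q * ((Finset.range (mu (Q + j) + g)).filter fun n => y (n + M) % Q = w).card : ℕ) : ℝ)
        ≤ (((3 * K + 7) * (mu (Q + j) + g) : ℕ) : ℝ) := Nat.cast_le.2 h5
    rw [Nat.cast_mul, Nat.cast_mul, hQdef, Nat.cast_pow] at h6
    exact h6
  intro m hm d hd
  obtain ⟨D, hD, hword⟩ := kor_word q hq m (fun i => if h : i < m then d ⟨i, h⟩ else 0)
    (fun i hi => by simp only [hi, dif_pos]; exact hd _)
  have hmain := kor_hotspot q hq y hy _ (Nat.cast_nonneg _) hfreq m hm D hD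
  refine hmain.congr fun N => ?_
  congr 2
  refine congrArg Finset.card (Finset.filter_congr fun n _ => ?_)
  rw [hword]
  have hdig : ∀ i, i < m → y (n + m) / q ^ (m - 1 - i) % q = qdigit q α (n + i) := by
    intro i hi
    have := hy (n + i + 1) (m - 1 - i)
    rw [show n + i + 1 + (m - 1 - i) = n + m by omega] at this
    rw [this]
    simp only [hydef, qdigit, Int.floor_toNat]
  constructor
  · intro h i
    have := h i i.2
    rw [hdig i i.2] at this
    simpa using this
  · intro h i hi
    rw [hdig i hi]
    simpa [hi] using h ⟨i, hi⟩
end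

section
/- For every integer N ≥ 3, the set F(N) = {x ∈ (0,1) irrational : a_i(x) ≤ N for all i ≥ 1} carries a Borel probability measure μ (i.e., μ(F(N)) = 1) for which there exist constants c > 0 and η > 0 such that |μ̂(t)| ≤ c·|t|^{−η} for all real t with |t| ≥ 1, where μ̂(t) = ∫ e^{−2πitx} dμ(x) (Kaufman's measure). -/
open Filter MeasureTheory Topology
open scoped Classical

/-- The Gauss map `T x = 1/x mod 1`. -/
noncomputable def gaussMap (x : ℝ) : ℝ := Int.fract x⁻¹

/-- `cfa n x` is the partial quotient `a_{n+1}(x)` of the regular continued fraction expansion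
of `x`, generated by the Gauss map: `a_1(x) = ⌊1/x⌋` and `a_{k+1}(x) = a_k (T x)`. -/
noncomputable def cfa : ℕ → ℝ → ℕ
  | 0, x => ⌊x⁻¹⌋₊
  | n + 1, x => cfa n (gaussMap x)

/-! ### Part A: the self-similar measure -/

/-- Weights of the digits `1, 2, 3`. -/
noncomputable def kwt : Fin 3 → ℝ := ![52/100, 29/100, 19/100]

lemma kwt_pos (d : Fin 3) : 0 < kwt d := by
  fin_cases d <;> simp [kwt]

lemma kwt_sum : ∑ d, kwt d = 1 := by
  simp [Fin.sum_univ_three, kwt]; norm_num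

/-- The digit law. -/
noncomputable def kdig : Measure (Fin 3) := ∑ d, ENNReal.ofReal (kwt d) • Measure.dirac d

instance : IsProbabilityMeasure kdig := by
  constructor
  simp only [kdig, Measure.coe_finsetSum, Finset.sum_apply, Measure.smul_apply, measure_univ,
    smul_eq_mul, mul_one]
  rw [← ENNReal.ofReal_sum_of_nonneg (fun i _ => (kwt_pos i).le), kwt_sum, ENNReal.ofReal_one]

/-- The product measure on digit sequences. -/
noncomputable def kprod : Measure (ℕ → Fin 3) := Measure.infinitePi (fun _ => kdig)

instance : IsProbabilityMeasure kprod := by unfold kprod; infer_instance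

/-- Prepend a digit. -/
def kcons (d : Fin 3) (a : ℕ → Fin 3) : ℕ → Fin 3
  | 0 => d
  | n + 1 => a n

lemma measurable_kcons (d : Fin 3) : Measurable (kcons d) := by
  refine measurable_pi_iff.2 fun n => ?_
  cases n with
  | zero => exact measurable_const
  | succ n => exact measurable_pi_apply n

lemma kprod_selfsim : (∑ d, ENNReal.ofReal (kwt d) • kprod.map (kcons d)) = kprod := by
  conv_rhs => rw [kprod]
  apply Measure.eq_infinitePi
  intro s t ht
  obtain ⟨n, hn⟩ : ∃ n, s ⊆ Finset.range (n + 1) :=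
    ⟨s.sup id, fun i hi => by
      rw [Finset.mem_range]; exact Nat.lt_succ_of_le (Finset.le_sup (f := id) hi)⟩
  set t' : ℕ → Set (Fin 3) := fun i => if i ∈ s then t i else Set.univ with ht'
  have h1 : Set.pi (s : Set ℕ) t = Set.pi (Finset.range (n+1) : Set ℕ) t' := by
    ext x
    simp only [Set.mem_pi, Finset.mem_coe, ht']
    constructor
    · intro h i _
      split_ifs with h'
      · exact h i h'
      · trivial
    · intro h i hi
      have := h i (hn hi)
      rwa [if_pos hi] at this
  have h2 : ∏ i ∈ s, kdig (t i) = ∏ i ∈ Finset.range (n+1), kdig (t' i) := by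
    rw [← Finset.prod_subset hn]
    · refine Finset.prod_congr rfl fun i hi => ?_
      simp [ht', hi]
    · intro i _ hi
      simp [ht', hi]
  rw [h1, h2, Finset.prod_range_succ']
  have hm : MeasurableSet (Set.pi (Finset.range (n+1) : Set ℕ) t') :=
    MeasurableSet.pi (Finset.countable_toSet _) fun i _ => by measurability
  simp only [Measure.coe_finsetSum, Finset.sum_apply, Measure.smul_apply, smul_eq_mul]
  have h3 : ∀ d, (kprod.map (kcons d)) (Set.pi (Finset.range (n+1) : Set ℕ) t')
      = (∏ k ∈ Finset.range n, kdig (t' (k+1))) * Set.indicator (t' 0) 1 d := by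
    intro d
    rw [Measure.map_apply (measurable_kcons d) hm]
    by_cases hd : d ∈ t' 0
    · have : kcons d ⁻¹' (Set.pi (Finset.range (n+1) : Set ℕ) t')
          = Set.pi (Finset.range n : Set ℕ) (fun k => t' (k+1)) := by
        ext a
        simp only [Set.mem_preimage, Set.mem_pi, Finset.coe_range, Set.mem_Iio]
        constructor
        · intro h i hi
          exact h (i+1) (by omega)
        · intro h i hi
          cases i with
          | zero => exact hd
          | succ i => exact h i (by omega)
      rw [this, kprod, Measure.infinitePi_pi _ (fun i _ => by measurability)]
      simp [hd]
    · have : kcons d ⁻¹' (Set.pi (Finset.range (n+1) : Set ℕ) t') = ∅ := by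
        ext a
        simp only [Set.mem_preimage, Set.mem_pi, Finset.coe_range, Set.mem_Iio,
          Set.mem_empty_iff_false, iff_false]
        intro h
        exact hd (h 0 (by omega))
      rw [this]; simp [hd]
  simp only [h3]
  have h4 : kdig (t' 0) = ∑ d, ENNReal.ofReal (kwt d) * Set.indicator (t' 0) 1 d := by
    simp only [kdig, Measure.coe_finsetSum, Finset.sum_apply, Measure.smul_apply, smul_eq_mul]
    refine Finset.sum_congr rfl fun d _ => ?_
    rw [Measure.dirac_apply]
  rw [h4, Finset.mul_sum]
  refine Finset.sum_congr rfl fun d _ => ?_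
  ring

/-- Finite approximations of the continued fraction map. -/
noncomputable def kapp : ℕ → (ℕ → Fin 3) → ℝ
  | 0, _ => 1/2
  | n + 1, a => 1 / ((a 0 : ℕ) + 1 + kapp n (fun k => a (k+1)))

lemma measurable_kapp (n : ℕ) : Measurable (kapp n) := by
  induction n with
  | zero => exact measurable_const
  | succ n ih =>
    have h0 : Measurable (fun a : ℕ → Fin 3 => (((a 0 : Fin 3) : ℕ) : ℝ)) :=
      (measurable_of_finite (fun d : Fin 3 => ((d : ℕ) : ℝ))).comp (measurable_pi_apply 0)
    have h1 : Measurable (fun a : ℕ → Fin 3 => fun k => a (k+1)) :=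
      measurable_pi_iff.2 fun k => measurable_pi_apply (k+1)
    exact ((h0.add_const 1).add (ih.comp h1)).const_div 1

lemma fin3_le (d : Fin 3) : ((d : ℕ) : ℝ) ≤ 2 := by
  have : (d : ℕ) ≤ 2 := by omega
  exact_mod_cast this

lemma inv_mem (d : Fin 3) {x : ℝ} (hx : x ∈ Set.Icc (1/4 : ℝ) (4/5)) :
    1 / (((d : ℕ) : ℝ) + 1 + x) ∈ Set.Icc (1/4 : ℝ) (4/5) := by
  have h0 : (0:ℝ) ≤ ((d : ℕ) : ℝ) := Nat.cast_nonneg _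
  have h2 := fin3_le d
  obtain ⟨h3, h4⟩ := hx
  constructor
  · rw [le_div_iff₀ (by linarith)]; linarith
  · rw [div_le_iff₀ (by linarith)]; linarith

lemma kapp_mem (n : ℕ) (a : ℕ → Fin 3) : kapp n a ∈ Set.Icc (1/4 : ℝ) (4/5) := by
  induction n generalizing a with
  | zero => simp only [kapp]; constructor <;> norm_num
  | succ n ih => exact inv_mem _ (ih _)

lemma kapp_dist (n : ℕ) (a : ℕ → Fin 3) :
    dist (kapp n a) (kapp (n+1) a) ≤ 1 * (16/25 : ℝ)^n := by
  induction n generalizing a with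
  | zero =>
    have h1 := kapp_mem 0 a
    have h2 := kapp_mem 1 a
    rw [Real.dist_eq, abs_le]
    constructor <;> linarith [h1.1, h1.2, h2.1, h2.2]
  | succ n ih =>
    have h := ih (fun k => a (k+1))
    have h1 := kapp_mem n (fun k => a (k+1))
    have h2 := kapp_mem (n+1) (fun k => a (k+1))
    rw [show kapp (n+1) a = 1 / (((a 0 : ℕ) : ℝ) + 1 + kapp n (fun k => a (k+1))) from rfl,
      show kapp (n+1+1) a = 1 / (((a 0 : ℕ) : ℝ) + 1 + kapp (n+1) (fun k => a (k+1))) from rfl]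
    set x := kapp n (fun k => a (k+1))
    set y := kapp (n+1) (fun k => a (k+1))
    have h0 : (0:ℝ) ≤ ((a 0 : ℕ) : ℝ) := Nat.cast_nonneg _
    have hx : (0:ℝ) < ((a 0 : ℕ) : ℝ) + 1 + x := by linarith [h1.1]
    have hy : (0:ℝ) < ((a 0 : ℕ) : ℝ) + 1 + y := by linarith [h2.1]
    rw [Real.dist_eq] at h ⊢
    have : 1 / (((a 0 : ℕ) : ℝ) + 1 + x) - 1 / (((a 0 : ℕ) : ℝ) + 1 + y)
       = - ((x - y) / ((((a 0 : ℕ) : ℝ) + 1 + x) * (((a 0 : ℕ) : ℝ) + 1 + y))) := by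
      field_simp; ring
    rw [this, abs_neg, abs_div, abs_of_pos (mul_pos hx hy), div_le_iff₀ (mul_pos hx hy)]
    have h3 : (25/16 : ℝ) ≤ (((a 0 : ℕ) : ℝ) + 1 + x) * (((a 0 : ℕ) : ℝ) + 1 + y) := by
      nlinarith [h1.1, h2.1]
    have h4 : (0:ℝ) ≤ (16/25 : ℝ)^n := by positivity
    rw [pow_succ]
    nlinarith

lemma kapp_tendsto (a : ℕ → Fin 3) : ∃ x, Tendsto (fun n => kapp n a) atTop (𝓝 x) :=
  cauchySeq_tendsto_of_complete
    (cauchySeq_of_le_geometric (16/25) 1 (by norm_num) (fun n => kapp_dist n a))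

/-- The continued fraction map. -/
noncomputable def kpi (a : ℕ → Fin 3) : ℝ := (kapp_tendsto a).choose

lemma kpi_spec (a : ℕ → Fin 3) : Tendsto (fun n => kapp n a) atTop (𝓝 (kpi a)) :=
  (kapp_tendsto a).choose_spec

lemma kpi_mem (a : ℕ → Fin 3) : kpi a ∈ Set.Icc (1/4 : ℝ) (4/5) :=
  isClosed_Icc.mem_of_tendsto (kpi_spec a) (Eventually.of_forall fun n => kapp_mem n a)

lemma measurable_kpi : Measurable kpi :=
  measurable_of_tendsto_metrizable measurable_kapp (tendsto_pi_nhds.2 kpi_spec)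

lemma kpi_eq (a : ℕ → Fin 3) : kpi a = 1 / (((a 0 : ℕ) : ℝ) + 1 + kpi (fun k => a (k+1))) := by
  have h1 := (tendsto_add_atTop_iff_nat 1).2 (kpi_spec a)
  have h2 := kpi_spec (fun k => a (k+1))
  have h3 := kpi_mem (fun k => a (k+1))
  have h0 : (0:ℝ) ≤ ((a 0 : ℕ) : ℝ) := Nat.cast_nonneg _
  refine tendsto_nhds_unique h1 ?_
  exact tendsto_const_nhds.div (h2.const_add _) (by linarith [h3.1])

lemma kpi_kcons (d : Fin 3) (a : ℕ → Fin 3) :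
    kpi (kcons d a) = 1 / (((d : ℕ) : ℝ) + 1 + kpi a) := kpi_eq (kcons d a)

lemma kpi_not_rat (n : ℕ) : ∀ (m : ℕ) (a : ℕ → Fin 3), kpi a * n = m → n = 0 := by
  induction n using Nat.strong_induction_on with
  | _ n ih =>
    intro m a h
    by_contra hn
    have hn' : (0:ℝ) < n := by exact_mod_cast Nat.pos_of_ne_zero hn
    have h1 := kpi_mem a
    have h2 := kpi_mem (fun k => a (k+1))
    have h0 : (0:ℝ) ≤ ((a 0 : ℕ) : ℝ) := Nat.cast_nonneg _
    have hmn : m < n := by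
      have : (m:ℝ) < n := by rw [← h]; nlinarith [h1.2]
      exact_mod_cast this
    have hm : m ≠ 0 := by
      rintro rfl
      have : 0 < kpi a * n := mul_pos (by linarith [h1.1]) hn'
      rw [h] at this; simp at this
    have hx := kpi_eq a
    have hpos : (0:ℝ) < ((a 0 : ℕ) : ℝ) + 1 + kpi (fun k => a (k+1)) := by linarith [h2.1]
    have h3 : kpi (fun k => a (k+1)) * m = n - (((a 0 : ℕ) : ℝ) + 1) * m := by
      rw [← h, hx]; field_simp; ring
    have h4 : ((a 0 : ℕ) + 1) * m ≤ n := by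
      have : (((a 0 : ℕ) : ℝ) + 1) * m ≤ n := by
        have : 0 ≤ kpi (fun k => a (k+1)) * m := mul_nonneg (by linarith [h2.1]) (by positivity)
        linarith
      exact_mod_cast this
    refine hm (ih m hmn (n - ((a 0 : ℕ) + 1) * m) (fun k => a (k+1)) ?_)
    rw [h3]; push_cast [h4]; ring

lemma kpi_irr (a : ℕ → Fin 3) : Irrational (kpi a) := by
  rintro ⟨x, hx⟩
  have h1 := kpi_mem a
  have hx0 : 0 < x := by
    have : (0:ℝ) < x := by rw [hx]; linarith [h1.1]
    exact_mod_cast this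
  have hnum : ((x.num.toNat : ℕ) : ℝ) = x * x.den := by
    have h2 : (x.num.toNat : ℤ) = x.num := Int.toNat_of_nonneg (Rat.num_pos.2 hx0).le
    have h3 : ((x.num.toNat : ℕ) : ℝ) = ((x.num : ℤ) : ℝ) := by
      have h4 : (((x.num.toNat : ℕ) : ℤ) : ℝ) = ((x.num : ℤ) : ℝ) := by rw [h2]
      rw [← h4]; simp only [Int.cast_natCast]
    rw [h3]
    have := Rat.mul_den_eq_num x
    exact_mod_cast this.symm
  exact x.den_nz (kpi_not_rat x.den x.num.toNat a (by rw [← hx, hnum]))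

lemma kpi_gauss (a : ℕ → Fin 3) : gaussMap (kpi a) = kpi (fun k => a (k+1)) := by
  have h2 := kpi_mem (fun k => a (k+1))
  rw [gaussMap, kpi_eq a, one_div, inv_inv]
  rw [Int.fract_eq_iff]
  refine ⟨by linarith [h2.1], by linarith [h2.2], (a 0 : ℕ) + 1, ?_⟩
  push_cast; ring

lemma kpi_cfa (i : ℕ) : ∀ a : ℕ → Fin 3, cfa i (kpi a) ≤ 3 := by
  induction i with
  | zero =>
    intro a
    have h1 := kpi_mem a
    rw [cfa]
    have hle : (kpi a)⁻¹ ≤ 4 := by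
      rw [inv_le_comm₀ (by linarith [h1.1]) (by norm_num)]; linarith [h1.1]
    have h2 := kpi_mem (fun k => a (k+1))
    have : (kpi a)⁻¹ < 4 := by
      rw [kpi_eq a, one_div, inv_inv]
      linarith [h2.2, fin3_le (a 0)]
    have : ⌊(kpi a)⁻¹⌋₊ < 4 := by
      rw [Nat.floor_lt (inv_nonneg.2 (by linarith [h1.1]))]
      exact_mod_cast this
    omega
  | succ i ih =>
    intro a
    rw [cfa, kpi_gauss]
    exact ih _

/-- The measure. -/
noncomputable def kmu : Measure ℝ := kprod.map kpi

instance : IsProbabilityMeasure kmu :=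
  Measure.isProbabilityMeasure_map measurable_kpi.aemeasurable

lemma kmu_supp (N : ℕ) (hN : 3 ≤ N) :
    kmu {x : ℝ | x ∈ Set.Ioo (0 : ℝ) 1 ∧ Irrational x ∧ ∀ i : ℕ, cfa i x ≤ N} = 1 := by
  refine le_antisymm prob_le_one ?_
  refine le_trans ?_ (Measure.le_map_apply measurable_kpi.aemeasurable _)
  have : kpi ⁻¹' {x : ℝ | x ∈ Set.Ioo (0 : ℝ) 1 ∧ Irrational x ∧ ∀ i : ℕ, cfa i x ≤ N}
      = Set.univ := by
    ext a
    have h := kpi_mem a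
    simp only [Set.mem_preimage, Set.mem_ofPred_eq, Set.mem_univ, iff_true]
    exact ⟨⟨by linarith [h.1], by linarith [h.2]⟩, kpi_irr a, fun i => (kpi_cfa i a).trans hN⟩
  rw [this, measure_univ]

lemma kmu_ae : ∀ᵐ y ∂kmu, y ∈ Set.Icc (1/4 : ℝ) (4/5) := by
  rw [kmu]
  exact (ae_map_iff (p := fun y => y ∈ Set.Icc (1/4 : ℝ) (4/5)) measurable_kpi.aemeasurable
    measurableSet_Icc).2 (Eventually.of_forall kpi_mem)

/-- Inverse branches of the Gauss map. -/
noncomputable def kbr (d : Fin 3) (y : ℝ) : ℝ := 1 / (((d : ℕ) : ℝ) + 1 + y)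

lemma measurable_kbr (d : Fin 3) : Measurable (kbr d) :=
  (measurable_id.const_add _).const_div 1

lemma kmu_selfsim : kmu = ∑ d, ENNReal.ofReal (kwt d) • kmu.map (kbr d) := by
  conv_lhs => rw [kmu, ← kprod_selfsim]
  rw [Measure.map_finset_sum measurable_kpi.aemeasurable]
  refine Finset.sum_congr rfl fun d _ => ?_
  rw [Measure.map_smul, kmu, Measure.map_map measurable_kpi (measurable_kcons d),
    Measure.map_map (measurable_kbr d) measurable_kpi]
  congr 2
  ext a
  exact kpi_kcons d a


/-! ### Part B: words -/

/-- Denominators `(q_n, q_{n-1})` of a reversed word. -/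
def kq : List (Fin 3) → ℕ × ℕ
  | [] => (1, 0)
  | d :: w => (((d : ℕ) + 1) * (kq w).1 + (kq w).2, (kq w).1)

/-- Numerators `(p_n, p_{n-1})` of a reversed word. -/
def kp : List (Fin 3) → ℕ × ℕ
  | [] => (0, 1)
  | d :: w => (((d : ℕ) + 1) * (kp w).1 + (kp w).2, (kp w).1)

/-- Probability of a word. -/
noncomputable def kP : List (Fin 3) → ℝ
  | [] => 1
  | d :: w => kP w * kwt d

/-- The denominator of the Moebius map of a word. -/
noncomputable def kden (w : List (Fin 3)) (y : ℝ) : ℝ := ((kq w).1 : ℝ) + ((kq w).2 : ℝ) * y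

/-- The Moebius map of a word. -/
noncomputable def kph (w : List (Fin 3)) (y : ℝ) : ℝ :=
  (((kp w).1 : ℝ) + ((kp w).2 : ℝ) * y) / kden w y

lemma kP_pos (w : List (Fin 3)) : 0 < kP w := by
  induction w with
  | nil => simp [kP]
  | cons d w ih => exact mul_pos ih (kwt_pos d)

lemma kq_one_le (w : List (Fin 3)) : 1 ≤ (kq w).1 := by
  induction w with
  | nil => simp [kq]
  | cons d w ih => simp only [kq]; nlinarith

lemma kq_le (w : List (Fin 3)) : (kq w).2 ≤ (kq w).1 := by
  cases w with
  | nil => simp [kq]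
  | cons d w => simp only [kq]; nlinarith [Nat.zero_le ((kq w).1 * (d : ℕ))]

lemma kq_cons_le (d : Fin 3) (w : List (Fin 3)) : (kq (d :: w)).1 ≤ 4 * (kq w).1 := by
  have h := kq_le w
  have : (d : ℕ) ≤ 2 := by omega
  simp only [kq]
  nlinarith

lemma kq_length (w : List (Fin 3)) : w.length ≤ (kq w).1 + (kq w).2 := by
  induction w with
  | nil => simp
  | cons d w ih =>
    have := kq_one_le w
    simp only [kq, List.length_cons]
    nlinarith [Nat.zero_le ((kq w).1 * (d : ℕ))]

lemma kq_length' (w : List (Fin 3)) : (w.length : ℝ) ≤ 2 * (kq w).1 := by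
  have h1 := kq_length w
  have h2 := kq_le w
  exact_mod_cast (by omega : w.length ≤ 2 * (kq w).1)

lemma kden_ge (w : List (Fin 3)) {y : ℝ} (hy : 0 ≤ y) : ((kq w).1 : ℝ) ≤ kden w y := by
  have : 0 ≤ ((kq w).2 : ℝ) * y := by positivity
  unfold kden; linarith

lemma kden_pos (w : List (Fin 3)) {y : ℝ} (hy : 0 ≤ y) : 0 < kden w y := by
  have : (1:ℝ) ≤ ((kq w).1 : ℝ) := by exact_mod_cast kq_one_le w
  linarith [kden_ge w hy]

lemma kph_nil (y : ℝ) : kph [] y = y := by simp [kph, kden, kp, kq]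

lemma kph_cons (d : Fin 3) (w : List (Fin 3)) {y : ℝ} (hy : 0 ≤ y) :
    kph (d :: w) y = kph w (kbr d y) := by
  have h1 := kden_pos (d :: w) hy
  have h0 : (0:ℝ) < ((d : ℕ) : ℝ) + 1 + y := by positivity
  have h2 : kden w (kbr d y) = kden (d :: w) y / (((d : ℕ) : ℝ) + 1 + y) := by
    simp only [kden, kbr, kq]; push_cast; field_simp; ring
  rw [kph, kph, h2]
  have h3 : ((kp w).1 : ℝ) + ((kp w).2 : ℝ) * kbr d y
      = (((kp (d::w)).1 : ℝ) + ((kp (d :: w)).2 : ℝ) * y) / (((d : ℕ) : ℝ) + 1 + y) := by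
    simp only [kbr, kp]; push_cast; field_simp; ring
  rw [h3]
  field_simp

lemma kdet (w : List (Fin 3)) :
    ((kp w).2 : ℝ) * (kq w).1 - (kp w).1 * (kq w).2 = (-1) ^ w.length := by
  induction w with
  | nil => simp [kp, kq]
  | cons d w ih =>
    simp only [kp, kq, List.length_cons, pow_succ, ← ih]; push_cast; ring

lemma kph_sub (w : List (Fin 3)) {x y : ℝ} (hx : 0 ≤ x) (hy : 0 ≤ y) :
    kph w x - kph w y = (-1) ^ w.length * (x - y) / (kden w x * kden w y) := by
  have h1 := kden_pos w hx
  have h2 := kden_pos w hy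
  rw [← kdet w, kph, kph, div_sub_div _ _ h1.ne' h2.ne']
  congr 1
  unfold kden; ring

lemma kph_abs_sub (w : List (Fin 3)) {x y : ℝ} (hx : 0 ≤ x) (hy : 0 ≤ y) :
    |kph w x - kph w y| = |x - y| / (kden w x * kden w y) := by
  have h1 := kden_pos w hx
  have h2 := kden_pos w hy
  rw [kph_sub w hx hy, abs_div, abs_mul, abs_pow, abs_of_pos (mul_pos h1 h2)]
  simp

lemma measurable_kph (w : List (Fin 3)) : Measurable (kph w) := by
  unfold kph kden
  fun_prop

/-- One step of the potential estimate. -/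
lemma kpot_step (d : Fin 3) {q q' : ℝ} (h1 : q' ≤ q) (h2 : q ≤ 4 * q') (h3 : 0 ≤ q') :
    kwt d ^ 3 * (((d : ℕ) + 1) * q + q' + 3/5 * q) ^ 4 ≤ (q + 3/5 * q') ^ 4 := by
  have key : ∀ ρ : ℝ, (((d : ℕ) : ℝ) + 1) * q + q' + 3/5 * q ≤ ρ * (q + 3/5 * q') →
      kwt d ^ 3 * ρ ^ 4 ≤ 1 →
      kwt d ^ 3 * ((((d : ℕ) : ℝ) + 1) * q + q' + 3/5 * q) ^ 4 ≤ (q + 3/5 * q') ^ 4 := by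
    intro ρ hρ h
    have hk := kwt_pos d
    have hd : (0:ℝ) ≤ ((d : ℕ) : ℝ) := Nat.cast_nonneg _
    have h0 : 0 ≤ (((d : ℕ) : ℝ) + 1) * q + q' + 3/5 * q := by
      have : 0 ≤ q := by linarith
      positivity
    calc kwt d ^ 3 * ((((d : ℕ) : ℝ) + 1) * q + q' + 3/5 * q) ^ 4
        ≤ kwt d ^ 3 * (ρ * (q + 3/5 * q')) ^ 4 := by gcongr
      _ = (kwt d ^ 3 * ρ ^ 4) * (q + 3/5 * q') ^ 4 := by ring
      _ ≤ 1 * (q + 3/5 * q') ^ 4 := by gcongr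
      _ = _ := one_mul _
  fin_cases d
  · refine key (13/8) ?_ ?_
    · norm_num; linarith
    · simp [kwt]; norm_num
  · refine key (57/23) ?_ ?_
    · norm_num; linarith
    · simp [kwt]; norm_num
  · refine key (77/23) ?_ ?_
    · norm_num; linarith
    · simp [kwt]; norm_num

lemma kpot (d : Fin 3) (w : List (Fin 3)) :
    kP (d :: w) ^ 3 * (((kq (d :: w)).1 : ℝ) + 3/5 * (kq (d :: w)).2) ^ 4 ≤ 2 := by
  induction w generalizing d with
  | nil =>
    fin_cases d <;> simp [kP, kq, kwt] <;> norm_num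
  | cons e w ih =>
    have h1 : ((kq (e :: w)).2 : ℝ) ≤ (kq (e :: w)).1 := by exact_mod_cast kq_le _
    have h2 : ((kq (e :: w)).1 : ℝ) ≤ 4 * (kq (e :: w)).2 := by
      have := kq_cons_le e w
      have h3 : (kq (e :: w)).2 = (kq w).1 := rfl
      rw [h3]; exact_mod_cast this
    have h := kpot_step d h1 h2 (Nat.cast_nonneg _)
    have hp := kP_pos (e :: w)
    refine le_trans ?_ (ih e)
    rw [show kP (d :: e :: w) = kP (e :: w) * kwt d from rfl,
      show (kq (d :: e :: w)).1 = ((d : ℕ) + 1) * (kq (e :: w)).1 + (kq (e :: w)).2 from rfl,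
      show (kq (d :: e :: w)).2 = (kq (e :: w)).1 from rfl, mul_pow, mul_assoc]
    push_cast
    gcongr

lemma kP_bound (w : List (Fin 3)) : kP w ^ 3 * ((kq w).1 : ℝ) ^ 4 ≤ 2 := by
  cases w with
  | nil => simp [kP, kq]
  | cons d w =>
    have hp := kP_pos (d :: w)
    refine le_trans ?_ (kpot d w)
    gcongr
    have : (0:ℝ) ≤ (kq (d :: w)).2 := Nat.cast_nonneg _
    linarith

lemma kP_le (w : List (Fin 3)) {ρ : ℝ} (hρ : 0 < ρ) (h : ρ ^ 3 ≤ 200 * ((kq w).1 : ℝ) ^ 2) :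
    kP w ≤ 44 / ρ ^ 2 := by
  have hp := kP_pos w
  rw [le_div_iff₀ (by positivity)]
  have h1 := kP_bound w
  have h2 : (ρ ^ 3) ^ 2 ≤ (200 * ((kq w).1 : ℝ) ^ 2) ^ 2 := by gcongr
  have h3 : (kP w * ρ ^ 2) ^ 3 ≤ 44 ^ 3 := by
    calc (kP w * ρ ^ 2) ^ 3 = kP w ^ 3 * (ρ ^ 3) ^ 2 := by ring
      _ ≤ kP w ^ 3 * (200 * ((kq w).1 : ℝ) ^ 2) ^ 2 := by gcongr
      _ = 40000 * (kP w ^ 3 * ((kq w).1 : ℝ) ^ 4) := by ring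
      _ ≤ 40000 * 2 := by gcongr
      _ ≤ 44 ^ 3 := by norm_num
  exact le_of_pow_le_pow_left₀ (by norm_num) (by norm_num) h3

lemma kbr_sep {d e : Fin 3} (hde : d ≠ e) {x y : ℝ} (hx : x ∈ Set.Icc (1/4 : ℝ) (4/5))
    (hy : y ∈ Set.Icc (1/4 : ℝ) (4/5)) : 3/100 ≤ |kbr d x - kbr e y| := by
  have hd : (0:ℝ) ≤ ((d : ℕ) : ℝ) := Nat.cast_nonneg _
  have he : (0:ℝ) ≤ ((e : ℕ) : ℝ) := Nat.cast_nonneg _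
  have hd2 := fin3_le d
  have he2 := fin3_le e
  obtain ⟨hx1, hx2⟩ := hx
  obtain ⟨hy1, hy2⟩ := hy
  have h1 : (0:ℝ) < ((d : ℕ) : ℝ) + 1 + x := by linarith
  have h2 : (0:ℝ) < ((e : ℕ) : ℝ) + 1 + y := by linarith
  have : kbr d x - kbr e y = ((((e : ℕ) : ℝ) - ((d : ℕ) : ℝ)) + (y - x)) /
      ((((d : ℕ) : ℝ) + 1 + x) * (((e : ℕ) : ℝ) + 1 + y)) := by
    unfold kbr; field_simp; ring
  rw [this, abs_div, abs_of_pos (mul_pos h1 h2), le_div_iff₀ (mul_pos h1 h2)]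
  have h3 : (((d : ℕ) : ℝ) + 1 + x) * (((e : ℕ) : ℝ) + 1 + y) ≤ (38/10) * (38/10) := by
    gcongr <;> linarith
  have h4 : (9/20 : ℝ) ≤ |(((e : ℕ) : ℝ) - ((d : ℕ) : ℝ)) + (y - x)| := by
    rcases lt_or_gt_of_ne (fun h => hde (Fin.ext h) : (d : ℕ) ≠ (e : ℕ)) with h | h
    · have : ((d : ℕ) : ℝ) + 1 ≤ ((e : ℕ) : ℝ) := by exact_mod_cast h
      exact le_trans (by linarith) (le_abs_self _)
    · have : ((e : ℕ) : ℝ) + 1 ≤ ((d : ℕ) : ℝ) := by exact_mod_cast h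
      exact le_trans (by linarith) (neg_le_abs _)
  linarith

lemma kmu_real_step (w : List (Fin 3)) {I : Set ℝ} (hI : MeasurableSet I) :
    kmu.real (kph w ⁻¹' I) = ∑ d, kwt d * kmu.real (kph (d :: w) ⁻¹' I) := by
  have hA : MeasurableSet (kph w ⁻¹' I) := measurable_kph w hI
  have h1 : kmu (kph w ⁻¹' I) = ∑ d, ENNReal.ofReal (kwt d) * kmu (kph (d :: w) ⁻¹' I) := by
    conv_lhs => rw [kmu_selfsim]
    simp only [Measure.coe_finsetSum, Finset.sum_apply, Measure.smul_apply, smul_eq_mul]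
    refine Finset.sum_congr rfl fun d _ => ?_
    rw [Measure.map_apply (measurable_kbr d) hA]
    congr 1
    refine measure_congr ?_
    filter_upwards [kmu_ae] with y hy
    have : kph (d :: w) y = kph w (kbr d y) := kph_cons d w (by linarith [hy.1])
    apply propext
    change kph w (kbr d y) ∈ I ↔ kph (d :: w) y ∈ I
    rw [this]
  rw [Measure.real, h1, ENNReal.toReal_sum (fun d _ => ENNReal.mul_ne_top ENNReal.ofReal_ne_top
    (measure_ne_top _ _))]
  refine Finset.sum_congr rfl fun d _ => ?_
  rw [ENNReal.toReal_mul, ENNReal.toReal_ofReal (kwt_pos d).le, Measure.real]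

lemma frost_word {ρ : ℝ} (hρ : 1 ≤ ρ) {I : Set ℝ} (hI : MeasurableSet I)
    (hd : ∀ x ∈ I, ∀ y ∈ I, |x - y| * ρ ^ 3 ≤ 1) (n : ℕ) :
    ∀ w : List (Fin 3), ρ ^ 3 ≤ n + w.length →
      kP w * kmu.real (kph w ⁻¹' I) ≤ 44 / ρ ^ 2 := by
  induction n with
  | zero =>
    intro w hw
    have h1 := kq_length' w
    have h2 : (1:ℝ) ≤ ((kq w).1 : ℝ) := by exact_mod_cast kq_one_le w
    have h3 := kP_le w (by linarith : 0 < ρ) (by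
      simp only [Nat.cast_zero, zero_add] at hw
      nlinarith)
    refine le_trans ?_ h3
    exact mul_le_of_le_one_right (kP_pos w).le measureReal_le_one
  | succ n ih =>
    intro w hw
    by_cases hq : ρ ^ 3 ≤ 200 * ((kq w).1 : ℝ) ^ 2
    · refine le_trans ?_ (kP_le w (by linarith : 0 < ρ) hq)
      exact mul_le_of_le_one_right (kP_pos w).le measureReal_le_one
    push Not at hq
    have hex : ∀ d, kmu.real (kph (d :: w) ⁻¹' I) ≠ 0 →
        ∃ y ∈ Set.Icc (1/4 : ℝ) (4/5), kph w (kbr d y) ∈ I := by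
      intro d h
      by_contra hcon
      push Not at hcon
      apply h
      rw [Measure.real]
      have : kmu (kph (d :: w) ⁻¹' I) = 0 := by
        refine measure_mono_null ?_ kmu_ae
        intro y hy
        by_contra hy2
        have hy3 : y ∈ Set.Icc (1/4 : ℝ) (4/5) := by
          by_contra h4; exact hy2 h4
        apply hcon y hy3
        rw [← kph_cons d w (by linarith [hy3.1])]
        exact hy
      rw [this]; rfl
    have huniq : ∀ d e, d ≠ e → kmu.real (kph (d :: w) ⁻¹' I) ≠ 0 →
        kmu.real (kph (e :: w) ⁻¹' I) = 0 := by
      intro d e hde h1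
      by_contra h2
      obtain ⟨x, hx, hxI⟩ := hex d h1
      obtain ⟨y, hy, hyI⟩ := hex e h2
      have h3 := hd _ hxI _ hyI
      have h4 := kbr_sep hde hx hy
      have hx' := inv_mem d hx
      have hy' := inv_mem e hy
      change kbr d x ∈ _ at hx'
      change kbr e y ∈ _ at hy'
      have hx0 : 0 ≤ kbr d x := by linarith [hx'.1]
      have hy0 : 0 ≤ kbr e y := by linarith [hy'.1]
      rw [kph_abs_sub w hx0 hy0] at h3
      have hdx := kden_pos w hx0
      have hdy := kden_pos w hy0
      have hq0 : (0:ℝ) ≤ (kq w).2 := Nat.cast_nonneg _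
      have hqq : ((kq w).2 : ℝ) ≤ (kq w).1 := by exact_mod_cast kq_le w
      have hdx2 : kden w (kbr d x) ≤ 2 * (kq w).1 := by
        unfold kden; nlinarith [hx'.2]
      have hdy2 : kden w (kbr e y) ≤ 2 * (kq w).1 := by
        unfold kden; nlinarith [hy'.2]
      have h5 : kden w (kbr d x) * kden w (kbr e y) ≤ (2 * (kq w).1) * (2 * (kq w).1) := by
        gcongr
      rw [div_mul_eq_mul_div, div_le_one (mul_pos hdx hdy)] at h3
      have h6 : (1:ℝ) ≤ ((kq w).1 : ℝ) := by exact_mod_cast kq_one_le w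
      nlinarith
    obtain ⟨d, hd'⟩ : ∃ d, ∀ e, e ≠ d → kmu.real (kph (e :: w) ⁻¹' I) = 0 := by
      by_cases h : ∃ d, kmu.real (kph (d :: w) ⁻¹' I) ≠ 0
      · obtain ⟨d, h⟩ := h
        exact ⟨d, fun e he => huniq d e he.symm h⟩
      · push Not at h
        exact ⟨0, fun e _ => h e⟩
    rw [kmu_real_step w hI, Finset.sum_eq_single d (fun e _ he => by rw [hd' e he, mul_zero])
      (fun h => absurd (Finset.mem_univ d) h), ← mul_assoc]
    refine ih (d :: w) ?_
    push_cast [List.length_cons] at hw ⊢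
    linarith

/-- Frostman condition. -/
lemma frost {ρ : ℝ} (hρ : 1 ≤ ρ) (x : ℝ) :
    kmu.real (Set.Icc (x - (ρ ^ 3)⁻¹) x) ≤ 44 / ρ ^ 2 := by
  obtain ⟨n, hn⟩ := exists_nat_ge (ρ ^ 3)
  have hpos : 0 < ρ ^ 3 := by positivity
  have := frost_word hρ (measurableSet_Icc (a := x - (ρ ^ 3)⁻¹) (b := x)) (by
    rintro a ⟨ha1, ha2⟩ b ⟨hb1, hb2⟩
    have : |a - b| ≤ (ρ ^ 3)⁻¹ := by rw [abs_le]; constructor <;> linarith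
    calc |a - b| * ρ ^ 3 ≤ (ρ ^ 3)⁻¹ * ρ ^ 3 := by gcongr
      _ = 1 := inv_mul_cancel₀ hpos.ne') n [] (by simpa using hn)
  have h2 : kph [] ⁻¹' Set.Icc (x - (ρ ^ 3)⁻¹) x = Set.Icc (x - (ρ ^ 3)⁻¹) x := by
    ext y; simp [kph_nil]
  rw [h2, kP, one_mul] at this
  exact this

lemma kq_inj (w : List (Fin 3)) : ∀ v : List (Fin 3), kq w = kq v →
    w.length % 2 = v.length % 2 → w = v := by
  have hlt : ∀ u : List (Fin 3), (kq u).2 < (kq u).1 ∨ ((kq u) = (1,1) ∧ u.length = 1) := by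
    intro u
    match u with
    | [] => left; simp [kq]
    | [d] => 
      rcases d with ⟨d, hd⟩
      rcases d with _ | d
      · right; simp [kq]
      · left; simp [kq]
    | d :: e :: u =>
      left
      have h1 := kq_one_le u
      have h2 := kq_one_le (e :: u)
      simp only [kq] at h2 ⊢
      nlinarith [Nat.zero_le ((d : ℕ) * (((e:ℕ) + 1) * (kq u).1 + (kq u).2))]
  have hone : ∀ u : List (Fin 3), (kq u).1 = 1 → u = [] ∨ u = [0] := by
    intro u hu
    match u with
    | [] => left; rfl
    | [d] =>
      right
      simp [kq] at hu
      rw [hu]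
    | d :: e :: u =>
      exfalso
      have h1 := kq_one_le u
      have h2 := kq_one_le (e :: u)
      simp only [kq] at h2 hu
      nlinarith [Nat.zero_le ((d : ℕ) * (((e:ℕ) + 1) * (kq u).1 + (kq u).2))]
  induction w with
  | nil =>
    intro v h hl
    cases v with
    | nil => rfl
    | cons e v =>
      exfalso
      have := kq_one_le v
      simp only [kq, Prod.mk.injEq] at h
      omega
  | cons d w ih =>
    intro v h hl
    cases v with
    | nil =>
      exfalso
      have := kq_one_le w
      simp only [kq, Prod.mk.injEq] at h
      omega
    | cons e v =>
      simp only [List.length_cons] at hl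
      have hl' : w.length % 2 = v.length % 2 := by omega
      simp only [kq, Prod.mk.injEq] at h
      obtain ⟨h1, h2⟩ := h
      have main : w = v → d :: w = e :: v := by
        rintro rfl
        have := kq_one_le w
        have h3 : ((d : ℕ) + 1) * (kq w).1 = ((e : ℕ) + 1) * (kq w).1 := by omega
        have h4 := Nat.eq_of_mul_eq_mul_right (by omega) h3
        have : d = e := Fin.ext (by omega)
        rw [this]
      apply main
      by_cases hc : (kq w).1 = 1
      · rcases hone w hc with rfl | rfl <;> rcases hone v (h2 ▸ hc) with rfl | rfl <;> simp_all
      · have hw : (kq w).2 < (kq w).1 := by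
          rcases hlt w with h | h
          · exact h
          · rw [h.1] at hc; simp at hc
        have hv : (kq v).2 < (kq v).1 := by
          rcases hlt v with h | h
          · exact h
          · rw [h2, h.1] at hc; simp at hc
        rw [← h2] at hv h1
        refine ih v (Prod.ext h2 ?_) hl'
        have e1 := congrArg (· % (kq w).1) h1
        simp only [Nat.mul_add_mod_self_right, Nat.mod_eq_of_lt hw, Nat.mod_eq_of_lt hv] at e1
        exact e1

lemma kint_step (w : List (Fin 3)) {f : ℝ → ℂ} (hf : Continuous f) (hb : ∀ x, ‖f x‖ ≤ 1) :
    ∫ y, f (kph w y) ∂kmu = ∑ d, (kwt d : ℂ) * ∫ y, f (kph (d :: w) y) ∂kmu := by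
  have hm : ∀ w, Measurable (fun y => f (kph w y)) := fun w => hf.measurable.comp (measurable_kph w)
  conv_lhs => rw [kmu_selfsim]
  rw [integral_finsetSum_measure]
  · refine Finset.sum_congr rfl fun d _ => ?_
    rw [integral_smul_measure, integral_map (measurable_kbr d).aemeasurable
      (hm w).aestronglyMeasurable, ENNReal.toReal_ofReal (kwt_pos d).le, Complex.real_smul]
    congr 1
    refine integral_congr_ae ?_
    filter_upwards [kmu_ae] with y hy
    rw [kph_cons d w (by linarith [hy.1])]
  · intro d _
    refine Integrable.smul_measure ?_ ENNReal.ofReal_ne_top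
    have : IsProbabilityMeasure (kmu.map (kbr d)) :=
      Measure.isProbabilityMeasure_map (measurable_kbr d).aemeasurable
    exact Integrable.of_bound (hm w).aestronglyMeasurable 1 (Eventually.of_forall fun y => hb _)

lemma kstopping_family {Q : ℝ} (n : ℕ) : ∀ w : List (Fin 3), ((kq w).1 : ℝ) ≤ 4 * Q →
    2 * Q ≤ n + w.length → ∃ W : Finset (List (Fin 3)),
      (∀ v ∈ W, w <:+ v ∧ Q ≤ (kq v).1 ∧ ((kq v).1 : ℝ) ≤ 4 * Q) ∧
      (∀ f : ℝ → ℂ, Continuous f → (∀ x, ‖f x‖ ≤ 1) →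
        (kP w : ℂ) * ∫ y, f (kph w y) ∂kmu = ∑ v ∈ W, (kP v : ℂ) * ∫ y, f (kph v y) ∂kmu) := by
  have base : ∀ w : List (Fin 3), ((kq w).1 : ℝ) ≤ 4 * Q → Q ≤ (kq w).1 →
    ∃ W : Finset (List (Fin 3)),
      (∀ v ∈ W, w <:+ v ∧ Q ≤ (kq v).1 ∧ ((kq v).1 : ℝ) ≤ 4 * Q) ∧
      (∀ f : ℝ → ℂ, Continuous f → (∀ x, ‖f x‖ ≤ 1) →
        (kP w : ℂ) * ∫ y, f (kph w y) ∂kmu = ∑ v ∈ W, (kP v : ℂ) * ∫ y, f (kph v y) ∂kmu) := by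
    intro w h1 h2
    refine ⟨{w}, ?_, ?_⟩
    · intro v hv
      rw [Finset.mem_singleton] at hv
      subst hv
      exact ⟨List.suffix_rfl, h2, h1⟩
    · intro f _ _
      rw [Finset.sum_singleton]
  induction n with
  | zero =>
    intro w h1 h2
    refine base w h1 ?_
    have := kq_length' w
    simp only [Nat.cast_zero, zero_add] at h2
    linarith
  | succ n ih =>
    intro w h1 h2
    by_cases hq : Q ≤ (kq w).1
    · exact base w h1 hq
    push Not at hq
    have hstep : ∀ d, ((kq (d :: w)).1 : ℝ) ≤ 4 * Q := by
      intro d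
      have : ((kq (d :: w)).1 : ℝ) ≤ 4 * (kq w).1 := by exact_mod_cast kq_cons_le d w
      linarith
    choose W hW1 hW2 using fun d => ih (d :: w) (hstep d) (by
      push_cast [List.length_cons] at h2 ⊢; linarith)
    refine ⟨Finset.univ.biUnion W, ?_, ?_⟩
    · intro v hv
      rw [Finset.mem_biUnion] at hv
      obtain ⟨d, _, hv⟩ := hv
      obtain ⟨h3, h4⟩ := hW1 d v hv
      exact ⟨(List.suffix_cons d w).trans h3, h4⟩
    · intro f hf hb
      rw [Finset.sum_biUnion, kint_step w hf hb, Finset.mul_sum]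
      · refine Finset.sum_congr rfl fun d _ => ?_
        rw [← hW2 d f hf hb, kP]
        push_cast
        ring
      · intro d _ e _ hde
        rw [Function.onFun, Finset.disjoint_left]
        intro v hv1 hv2
        have h3 := (hW1 d v hv1).1
        have h4 := (hW1 e v hv2).1
        have h5 := List.suffix_of_suffix_length_le h3 h4 (by simp)
        have h6 := h5.eq_of_length (by simp)
        exact hde (List.cons.inj h6).1


/-! ### Part C: analysis -/

lemma arctan_bound {A B κ : ℝ} (hκ : 0 < κ) :
    |B| * ∫ y in (0:ℝ)..2, 1 / ((A + B * y) ^ 2 + κ ^ 2) ≤ 4 / κ := by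
  have hpos : ∀ y : ℝ, 0 < (A + B * y) ^ 2 + κ ^ 2 := fun y => by positivity
  have hcont : Continuous fun y : ℝ => 1 / ((A + B * y) ^ 2 + κ ^ 2) :=
    continuous_const.div (by fun_prop) (fun y => (hpos y).ne')
  have hJ : 0 ≤ ∫ y in (0:ℝ)..2, 1 / ((A + B * y) ^ 2 + κ ^ 2) :=
    intervalIntegral.integral_nonneg (by norm_num) fun y _ => by positivity
  have hd : ∀ y ∈ Set.uIcc (0:ℝ) 2, HasDerivAt (fun y => Real.arctan ((A + B * y) / κ) / κ)
      (B * (1 / ((A + B * y) ^ 2 + κ ^ 2))) y := by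
    intro y _
    have h1 : HasDerivAt (fun y : ℝ => (A + B * y) / κ) (B / κ) y := by
      simpa using (((hasDerivAt_id y).const_mul B).const_add A).div_const κ
    refine (h1.arctan.div_const κ).congr_deriv ?_
    have := hpos y
    have h2 : 0 < 1 + ((A + B * y) / κ) ^ 2 := by positivity
    field_simp
    ring
  have h1 := intervalIntegral.integral_eq_sub_of_hasDerivAt hd
    ((continuous_const.mul hcont).intervalIntegrable 0 2)
  rw [intervalIntegral.integral_const_mul] at h1
  have h2 : |B| * (∫ y in (0:ℝ)..2, 1 / ((A + B * y) ^ 2 + κ ^ 2))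
      = |B * ∫ y in (0:ℝ)..2, 1 / ((A + B * y) ^ 2 + κ ^ 2)| := by
    rw [abs_mul, abs_of_nonneg hJ]
  rw [h2, h1, ← sub_div, abs_div, abs_of_pos hκ]
  gcongr
  have a1 := Real.arctan_lt_pi_div_two ((A + B * 2) / κ)
  have a2 := Real.neg_pi_div_two_lt_arctan ((A + B * 2) / κ)
  have a3 := Real.arctan_lt_pi_div_two ((A + B * 0) / κ)
  have a4 := Real.neg_pi_div_two_lt_arctan ((A + B * 0) / κ)
  have := Real.pi_le_four
  rw [abs_le]
  constructor <;> linarith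

lemma osc {A B κ θ D : ℝ} {ψ K K' : ℝ → ℝ} (hκ : 0 < κ) (hκ1 : κ ≤ 1) (hD : 0 < D)
    (hθ : κ ^ 2 * |θ| = D) (hAB : B ≠ 0 → 1 ≤ |B|) (hA : B = 0 → 1 ≤ |A|)
    (hK : ∀ y ∈ Set.Icc (0:ℝ) 2, HasDerivAt K (K' y) y)
    (hKc : ContinuousOn K' (Set.Icc (0:ℝ) 2))
    (hK0 : ∀ y ∈ Set.Icc (0:ℝ) 2, 0 < K y) (hK1 : ∀ y ∈ Set.Icc (0:ℝ) 2, K y ≤ D)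
    (hK2 : ∀ y ∈ Set.Icc (0:ℝ) 2, |K' y| ≤ D)
    (hψ : ∀ y ∈ Set.Icc (0:ℝ) 2, HasDerivAt ψ (θ * (A + B * y) / K y) y) :
    ‖∫ y in (0:ℝ)..2, Complex.exp ((ψ y : ℂ) * Complex.I)‖ ≤ 10 * κ := by
  have huIcc : Set.uIcc (0:ℝ) 2 = Set.Icc 0 2 := Set.uIcc_of_le (by norm_num)
  have hθ0 : 0 < |θ| := by
    by_contra h
    have : |θ| = 0 := le_antisymm (not_lt.1 h) (abs_nonneg _)
    rw [this] at hθ; linarith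
  have hθne : θ ≠ 0 := abs_pos.1 hθ0
  have hpos : ∀ y : ℝ, 0 < (A + B * y) ^ 2 + κ ^ 2 := fun y => by positivity
  set E : ℝ → ℝ := fun y => 1 / ((A + B * y) ^ 2 + κ ^ 2) with hE
  have hEpos : ∀ y, 0 < E y := fun y => by simp only [hE]; have := hpos y; positivity
  have hEc : Continuous E := continuous_const.div (by fun_prop) (fun y => (hpos y).ne')
  have hEint : ∀ c : ℝ, IntervalIntegrable (fun y => c * E y) volume 0 2 :=
    fun c => (continuous_const.mul hEc).intervalIntegrable 0 2
  set ℓ : ℝ → ℝ := fun y => A + B * y with hℓ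
  have hℓc : Continuous ℓ := by simp only [hℓ]; fun_prop
  have hE1 : ∀ y, |ℓ y| * E y ≤ 1 / (2 * κ) := by
    intro y
    have := hpos y
    simp only [hE, hℓ]
    rw [mul_one_div, div_le_div_iff₀ this (by positivity)]
    nlinarith [sq_nonneg (|A + B * y| - κ), sq_abs (A + B * y)]
  set V : ℝ → ℂ := fun y => Complex.exp ((ψ y : ℂ) * Complex.I) with hV
  have hVn : ∀ y, ‖V y‖ = 1 := fun y => Complex.norm_exp_ofReal_mul_I _
  set V' : ℝ → ℂ := fun y => V y * (((θ * ℓ y / K y : ℝ) : ℂ) * Complex.I) with hV'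
  set M : ℝ → ℝ := fun y => ℓ y * E y * K y / θ with hM
  set M' : ℝ → ℝ := fun y =>
    ((B * (κ ^ 2 - ℓ y ^ 2) * E y ^ 2) * K y + ℓ y * E y * K' y) / θ with hM'
  have hVd : ∀ y ∈ Set.uIcc (0:ℝ) 2, HasDerivAt V (V' y) y := by
    intro y hy
    rw [huIcc] at hy
    exact ((hψ y hy).ofReal_comp.mul_const Complex.I).cexp
  have hMd : ∀ y ∈ Set.uIcc (0:ℝ) 2, HasDerivAt (fun y => (M y : ℂ)) ((M' y : ℝ) : ℂ) y := by
    intro y hy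
    rw [huIcc] at hy
    apply HasDerivAt.ofReal_comp
    have hl : HasDerivAt ℓ B y := by
      have h := ((hasDerivAt_id y).const_mul B).const_add A
      rw [mul_one] at h
      exact h
    have h1 : HasDerivAt (fun y => ℓ y * E y) (B * (κ ^ 2 - ℓ y ^ 2) * E y ^ 2) y := by
      have h2 : HasDerivAt (fun y => ℓ y ^ 2 + κ ^ 2) (2 * ℓ y * B) y := by
        simpa using (hl.pow 2).add_const (κ ^ 2)
      have h3 := hl.div h2 (hpos y).ne'
      have h4 : (fun y => ℓ y * E y) = (ℓ / fun y => ℓ y ^ 2 + κ ^ 2) := by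
        ext z; simp only [hE, hℓ, Pi.div_apply]; ring
      rw [h4]
      refine h3.congr_deriv ?_
      have := hpos y
      simp only [hE]
      change (B * ((A + B * y) ^ 2 + κ ^ 2) - (A + B * y) * (2 * (A + B * y) * B)) / ((A + B * y) ^ 2 + κ ^ 2) ^ 2
        = B * (κ ^ 2 - (A + B * y) ^ 2) * (1 / ((A + B * y) ^ 2 + κ ^ 2)) ^ 2
      field_simp
      ring
    exact (h1.mul (hK y hy)).div_const θ
  have hKcont : ContinuousOn K (Set.Icc 0 2) := fun y hy => (hK y hy).continuousAt.continuousWithinAt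
  have hVcont : ContinuousOn V (Set.Icc 0 2) := fun y hy =>
    (hVd y (by rwa [huIcc])).continuousAt.continuousWithinAt
  have hV'cont : ContinuousOn V' (Set.Icc 0 2) := by
    refine hVcont.mul (ContinuousOn.mul ?_ continuousOn_const)
    refine Complex.continuous_ofReal.comp_continuousOn ?_
    exact (continuous_const.mul hℓc).continuousOn.div hKcont (fun y hy => (hK0 y hy).ne')
  have hM'cont : ContinuousOn M' (Set.Icc 0 2) := by
    refine ContinuousOn.div_const (ContinuousOn.add (ContinuousOn.mul ?_ hKcont)
      (ContinuousOn.mul ?_ hKc)) θ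
    · exact (by fun_prop : Continuous fun y => B * (κ ^ 2 - ℓ y ^ 2) * E y ^ 2).continuousOn
    · exact (hℓc.mul hEc).continuousOn
  have hIV' : IntervalIntegrable V' volume 0 2 := by
    apply ContinuousOn.intervalIntegrable; rwa [huIcc]
  have hMc : ContinuousOn (fun y => (M y : ℂ)) (Set.Icc 0 2) := fun y hy =>
    (hMd y (by rwa [huIcc])).continuousAt.continuousWithinAt
  have hIM' : IntervalIntegrable (fun y => ((M' y : ℝ) : ℂ)) volume 0 2 := by
    apply ContinuousOn.intervalIntegrable; rw [huIcc]
    exact Complex.continuous_ofReal.comp_continuousOn hM'cont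
  have hparts := intervalIntegral.integral_mul_deriv_eq_deriv_mul hMd hVd hIM' hIV'
  have hIEV : IntervalIntegrable (fun y => ((κ ^ 2 * E y : ℝ) : ℂ) * V y) volume 0 2 := by
    apply ContinuousOn.intervalIntegrable; rw [huIcc]
    exact (Complex.continuous_ofReal.comp (continuous_const.mul hEc)).continuousOn.mul hVcont
  have hIMV : IntervalIntegrable (fun y => -Complex.I * ((M y : ℂ) * V' y)) volume 0 2 := by
    apply ContinuousOn.intervalIntegrable; rw [huIcc]
    exact continuousOn_const.mul (hMc.mul hV'cont)
  have hdec : ∫ y in (0:ℝ)..2, V y = (∫ y in (0:ℝ)..2, ((κ ^ 2 * E y : ℝ) : ℂ) * V y)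
      + ∫ y in (0:ℝ)..2, -Complex.I * ((M y : ℂ) * V' y) := by
    rw [← intervalIntegral.integral_add hIEV hIMV]
    refine intervalIntegral.integral_congr fun y hy => ?_
    rw [huIcc] at hy
    have hk := (hK0 y hy).ne'
    have h1 : M y * (θ * ℓ y / K y) = ℓ y ^ 2 * E y := by
      simp only [hM]; field_simp
    have h2 : κ ^ 2 * E y + ℓ y ^ 2 * E y = 1 := by
      have := (hpos y).ne'
      simp only [hE, hℓ]; field_simp; ring
    have h3 : -Complex.I * ((M y : ℂ) * V' y) = ((M y * (θ * ℓ y / K y) : ℝ) : ℂ) * V y := by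
      simp only [hV']
      push_cast
      linear_combination (-(M y : ℂ) * V y * ((θ : ℂ) * ℓ y / K y)) * Complex.I_mul_I
    change V y = ((κ ^ 2 * E y : ℝ) : ℂ) * V y + -Complex.I * ((M y : ℂ) * V' y)
    rw [h3, h1, ← add_mul, ← Complex.ofReal_add, h2]; simp
  have hJ := arctan_bound (A := A) (B := B) hκ
  change |B| * ∫ y in (0:ℝ)..2, E y ≤ 4 / κ at hJ
  have hJ0 : 0 ≤ ∫ y in (0:ℝ)..2, E y :=
    intervalIntegral.integral_nonneg (by norm_num) fun y _ => (hEpos y).le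
  have b1 : ‖∫ y in (0:ℝ)..2, ((κ ^ 2 * E y : ℝ) : ℂ) * V y‖ ≤ 4 * κ := by
    have h1 : ‖∫ y in (0:ℝ)..2, ((κ ^ 2 * E y : ℝ) : ℂ) * V y‖
        ≤ ∫ y in (0:ℝ)..2, κ ^ 2 * E y := by
      refine intervalIntegral.norm_integral_le_of_norm_le (by norm_num) ?_ (hEint _)
      refine Eventually.of_forall fun y _ => ?_
      rw [norm_mul, hVn, mul_one, Complex.norm_real, Real.norm_eq_abs, abs_of_nonneg]
      have := hEpos y
      positivity
    refine h1.trans ?_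
    rw [intervalIntegral.integral_const_mul]
    by_cases hB : B = 0
    · have hA1 := hA hB
      have h2 : ∫ y in (0:ℝ)..2, E y ≤ ∫ y in (0:ℝ)..2, (1:ℝ) := by
        refine intervalIntegral.integral_mono_on (by norm_num) (hEc.intervalIntegrable 0 2)
          (by simp) fun y _ => ?_
        simp only [hE, hB]
        rw [div_le_one (by positivity)]
        nlinarith [sq_abs A, sq_nonneg κ]
      simp only [intervalIntegral.integral_const, smul_eq_mul] at h2
      nlinarith
    · have hB1 := hAB hB
      have h2 : ∫ y in (0:ℝ)..2, E y ≤ 4 / κ := by nlinarith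
      calc κ ^ 2 * ∫ y in (0:ℝ)..2, E y ≤ κ ^ 2 * (4 / κ) := by gcongr
        _ = 4 * κ := by field_simp
  have bM : ∀ y ∈ Set.Icc (0:ℝ) 2, ‖(M y : ℂ) * V y‖ ≤ κ / 2 := by
    intro y hy
    rw [norm_mul, hVn, mul_one, Complex.norm_real, Real.norm_eq_abs]
    simp only [hM]
    rw [abs_div, abs_mul, abs_mul, abs_of_pos (hEpos y), abs_of_pos (hK0 y hy),
      div_le_iff₀ hθ0]
    calc |ℓ y| * E y * K y ≤ 1 / (2 * κ) * D := by
          have := hK0 y hy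
          have := hE1 y
          have := hK1 y hy
          have := hEpos y
          gcongr
      _ = κ / 2 * |θ| := by rw [← hθ]; field_simp
  have bM' : ∀ y ∈ Set.Icc (0:ℝ) 2, ‖((M' y : ℝ) : ℂ) * V y‖ ≤ κ ^ 2 * |B| * E y + κ / 2 := by
    intro y hy
    rw [norm_mul, hVn, mul_one, Complex.norm_real, Real.norm_eq_abs]
    simp only [hM']
    have hk := hK0 y hy
    have he := hEpos y
    have he1 := hE1 y
    have hk1 := hK1 y hy
    have hk2 := hK2 y hy
    rw [abs_div, div_le_iff₀ hθ0]
    have h1 : |κ ^ 2 - ℓ y ^ 2| * E y ≤ 1 := by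
      have h2 : |κ ^ 2 - ℓ y ^ 2| ≤ ℓ y ^ 2 + κ ^ 2 := by
        rw [abs_le]; constructor <;> nlinarith [sq_nonneg (ℓ y), sq_nonneg κ]
      calc |κ ^ 2 - ℓ y ^ 2| * E y ≤ (ℓ y ^ 2 + κ ^ 2) * E y := by gcongr
        _ = 1 := by
          have := (hpos y).ne'
          simp only [hE, hℓ]; field_simp
    calc |B * (κ ^ 2 - ℓ y ^ 2) * E y ^ 2 * K y + ℓ y * E y * K' y|
        ≤ |B * (κ ^ 2 - ℓ y ^ 2) * E y ^ 2 * K y| + |ℓ y * E y * K' y| := abs_add_le _ _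
      _ = |B| * (|κ ^ 2 - ℓ y ^ 2| * E y) * E y * K y + |ℓ y| * E y * |K' y| := by
          rw [abs_mul, abs_mul, abs_mul, abs_mul, abs_mul, abs_pow, abs_of_pos he, abs_of_pos hk]
          ring
      _ ≤ |B| * 1 * E y * D + 1 / (2 * κ) * D := by gcongr
      _ = (κ ^ 2 * |B| * E y + κ / 2) * |θ| := by rw [← hθ]; field_simp
  have b3 : ‖∫ y in (0:ℝ)..2, ((M' y : ℝ) : ℂ) * V y‖ ≤ 5 * κ := by
    have h1 : ‖∫ y in (0:ℝ)..2, ((M' y : ℝ) : ℂ) * V y‖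
        ≤ ∫ y in (0:ℝ)..2, (κ ^ 2 * |B| * E y + κ / 2) := by
      refine intervalIntegral.norm_integral_le_of_norm_le (by norm_num) ?_
        ((hEint _).add (by simp))
      exact Eventually.of_forall fun y hy => bM' y ⟨hy.1.le, hy.2⟩
    refine h1.trans ?_
    rw [intervalIntegral.integral_add (hEint _) (by simp), intervalIntegral.integral_const_mul,
      intervalIntegral.integral_const, smul_eq_mul, mul_assoc]
    have : κ ^ 2 * (|B| * ∫ y in (0:ℝ)..2, E y) ≤ κ ^ 2 * (4 / κ) := by gcongr
    have h2 : κ ^ 2 * (4 / κ) = 4 * κ := by field_simp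
    linarith
  rw [hdec, intervalIntegral.integral_const_mul, hparts]
  have c0 := bM 0 (by norm_num)
  have c2 := bM 2 (by norm_num)
  refine (norm_add_le _ _).trans ?_
  rw [norm_mul, norm_neg, Complex.norm_I, one_mul]
  have := norm_sub_le ((M 2 : ℂ) * V 2 - (M 0 : ℂ) * V 0) (∫ y in (0:ℝ)..2, ((M' y : ℝ) : ℂ) * V y)
  have := norm_sub_le ((M 2 : ℂ) * V 2) ((M 0 : ℂ) * V 0)
  linarith


lemma kden_deriv (w : List (Fin 3)) (y : ℝ) : HasDerivAt (kden w) ((kq w).2 : ℝ) y := by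
  have h := ((hasDerivAt_id y).const_mul ((kq w).2 : ℝ)).const_add ((kq w).1 : ℝ)
  rw [mul_one] at h
  exact h

lemma kph_deriv (w : List (Fin 3)) {y : ℝ} (hy : 0 ≤ y) :
    HasDerivAt (kph w) ((-1) ^ w.length / (kden w y) ^ 2) y := by
  have h1 : HasDerivAt (fun y : ℝ => ((kp w).1 : ℝ) + ((kp w).2 : ℝ) * y) ((kp w).2 : ℝ) y := by
    have h := ((hasDerivAt_id y).const_mul ((kp w).2 : ℝ)).const_add ((kp w).1 : ℝ)
    rw [mul_one] at h
    exact h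
  refine (h1.div (kden_deriv w y) (kden_pos w hy).ne').congr_deriv ?_
  rw [← kdet w]
  congr 1
  unfold kden; ring

lemma kden_le (w : List (Fin 3)) {y Q : ℝ} (hy : y ≤ 2) (hQ : ((kq w).1 : ℝ) ≤ 4 * Q) :
    kden w y ≤ 12 * Q := by
  have h1 : ((kq w).2 : ℝ) ≤ (kq w).1 := by exact_mod_cast kq_le w
  have h2 : (0:ℝ) ≤ (kq w).2 := Nat.cast_nonneg _
  unfold kden
  nlinarith

lemma osc_words {w v : List (Fin 3)} {Q κ θ : ℝ} (hQ : 1 ≤ Q) (hκ : 0 < κ)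
    (hθ : κ ^ 2 * |θ| = 1764 * Q ^ 3)
    (hpar : w.length % 2 = v.length % 2) (hne : w ≠ v)
    (hw : Q ≤ (kq w).1 ∧ ((kq w).1 : ℝ) ≤ 4 * Q) (hv : Q ≤ (kq v).1 ∧ ((kq v).1 : ℝ) ≤ 4 * Q) :
    ‖∫ y in (0:ℝ)..2, Complex.exp (((θ * (kph w y - kph v y) : ℝ) : ℂ) * Complex.I)‖
      ≤ 10 * κ := by
  by_cases hκ1 : κ ≤ 1
  swap
  · push Not at hκ1
    have := intervalIntegral.norm_integral_le_of_norm_le_const (a := (0:ℝ)) (b := 2) (C := 1)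
      (f := fun y => Complex.exp (((θ * (kph w y - kph v y) : ℝ) : ℂ) * Complex.I))
      (fun y _ => (Complex.norm_exp_ofReal_mul_I _).le)
    norm_num at this ⊢
    linarith
  have hneq : kq w ≠ kq v := fun h => hne (kq_inj w v h hpar)
  have hsgn : ((-1:ℝ)) ^ v.length = (-1) ^ w.length := by
    rw [neg_one_pow_eq_pow_mod_two, ← hpar, ← neg_one_pow_eq_pow_mod_two]
  set a : ℝ := ((kq w).1 : ℝ) with ha
  set a' : ℝ := ((kq w).2 : ℝ) with ha'
  set b : ℝ := ((kq v).1 : ℝ) with hb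
  set b' : ℝ := ((kq v).2 : ℝ) with hb'
  have ha'0 : 0 ≤ a' := Nat.cast_nonneg _
  have hb'0 : 0 ≤ b' := Nat.cast_nonneg _
  have ha'1 : a' ≤ 4 * Q := le_trans ((Nat.cast_le (α := ℝ)).2 (kq_le w)) hw.2
  have hb'1 : b' ≤ 4 * Q := le_trans ((Nat.cast_le (α := ℝ)).2 (kq_le v)) hv.2
  have h_integ : ∀ m n : ℕ, m ≠ n → (1:ℝ) ≤ |(n:ℝ) - m| := by
    intro m n h
    rcases lt_or_gt_of_ne h with h | h
    · have : (m:ℝ) + 1 ≤ n := by exact_mod_cast h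
      exact le_trans (by linarith) (le_abs_self _)
    · have : (n:ℝ) + 1 ≤ m := by exact_mod_cast h
      exact le_trans (by linarith) (neg_le_abs _)
  have hU : ∀ y ∈ Set.Icc (0:ℝ) 2, Q ≤ kden w y ∧ kden w y ≤ 12 * Q ∧ Q ≤ kden v y ∧
      kden v y ≤ 12 * Q := fun y hy =>
    ⟨hw.1.trans (kden_ge w hy.1), kden_le w hy.2 hw.2, hv.1.trans (kden_ge v hy.1),
      kden_le v hy.2 hv.2⟩
  have hQ0 : 0 < Q := by linarith
  refine osc (A := b - a) (B := b' - a') (θ := θ * (-1) ^ w.length) (D := 1764 * Q ^ 3)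
    (K := fun y => (kden w y * kden v y) ^ 2 / (kden w y + kden v y))
    (K' := fun y => (2 * (kden w y * kden v y) * (a' * kden v y + kden w y * b') *
      (kden w y + kden v y) - (kden w y * kden v y) ^ 2 * (a' + b')) / (kden w y + kden v y) ^ 2)
    hκ hκ1 (by positivity) ?_ ?_ ?_ ?_ ?_ ?_ ?_ ?_ ?_
  · rw [abs_mul, abs_pow, abs_neg, abs_one, one_pow, mul_one, hθ]
  · intro h
    refine h_integ _ _ fun h' => h ?_
    simp only [ha', hb', h', sub_self]
  · intro h
    refine h_integ _ _ fun h' => hneq (Prod.ext h' ?_)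
    have : a' = b' := by linarith
    exact Nat.cast_injective (R := ℝ) this
  · intro y hy
    obtain ⟨h1, h2, h3, h4⟩ := hU y hy
    have hu := kden_deriv w y
    have hv' := kden_deriv v y
    have hp : kden w y + kden v y ≠ 0 := by linarith
    refine (((hu.mul hv').pow 2).div (hu.add hv') hp).congr_deriv ?_
    simp only [Pi.mul_apply, Pi.add_apply, Pi.pow_apply]
    push_cast
    ring
  · have c1 : Continuous (kden w) := continuous_iff_continuousAt.2 fun y =>
      (kden_deriv w y).continuousAt
    have c2 : Continuous (kden v) := continuous_iff_continuousAt.2 fun y =>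
      (kden_deriv v y).continuousAt
    refine ContinuousOn.div (by fun_prop) (by fun_prop) ?_
    intro y hy
    obtain ⟨h1, h2, h3, h4⟩ := hU y hy
    have : 0 < kden w y + kden v y := by linarith
    positivity
  · intro y hy
    obtain ⟨h1, h2, h3, h4⟩ := hU y hy
    have : 0 < kden w y := by linarith
    have : 0 < kden v y := by linarith
    positivity
  · intro y hy
    obtain ⟨h1, h2, h3, h4⟩ := hU y hy
    have p1 : 0 < kden w y := by linarith
    have p2 : 0 < kden v y := by linarith
    rw [div_le_iff₀ (by positivity)]
    calc (kden w y * kden v y) ^ 2 = kden w y * kden w y * kden v y * kden v y := by ring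
      _ ≤ (12 * Q) * (12 * Q) * (12 * Q) * (kden w y + kden v y) := by gcongr; linarith
      _ ≤ 1764 * Q ^ 3 * (kden w y + kden v y) := by
        have : 0 < Q ^ 3 * (kden w y + kden v y) := by positivity
        nlinarith
  · intro y hy
    obtain ⟨h1, h2, h3, h4⟩ := hU y hy
    have p1 : 0 < kden w y := by linarith
    have p2 : 0 < kden v y := by linarith
    set u := kden w y
    set z := kden v y
    have hs : 0 < u + z := by linarith
    have hQ3 : 0 < Q ^ 3 := by positivity
    have huz : u * z ≤ 144 * Q ^ 2 := by nlinarith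
    have e1 : 2 * (u * z) * (a' * z + u * b') * (u + z) ≤ 1764 * Q ^ 3 * (u + z) ^ 2 := by
      have : a' * z + u * b' ≤ 4 * Q * (u + z) := by nlinarith
      calc 2 * (u * z) * (a' * z + u * b') * (u + z)
          ≤ 2 * (144 * Q ^ 2) * (4 * Q * (u + z)) * (u + z) := by gcongr
        _ = 1152 * (Q ^ 3 * (u + z) ^ 2) := by ring
        _ ≤ 1764 * (Q ^ 3 * (u + z) ^ 2) := by
          have : 0 < Q ^ 3 * (u + z) ^ 2 := by positivity
          linarith
        _ = _ := by ring
    have e2 : (u * z) ^ 2 * (a' + b') ≤ 1764 * Q ^ 3 * (u + z) ^ 2 := by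
      have h5 : u * z ≤ (u + z) ^ 2 := by nlinarith
      calc (u * z) ^ 2 * (a' + b') = (u * z) * (u * z) * (a' + b') := by ring
        _ ≤ (144 * Q ^ 2) * (u + z) ^ 2 * (4 * Q + 4 * Q) := by gcongr
        _ = 1152 * (Q ^ 3 * (u + z) ^ 2) := by ring
        _ ≤ 1764 * (Q ^ 3 * (u + z) ^ 2) := by
          have : 0 < Q ^ 3 * (u + z) ^ 2 := by positivity
          linarith
        _ = _ := by ring
    have e3 : 0 ≤ 2 * (u * z) * (a' * z + u * b') * (u + z) := by positivity
    have e4 : 0 ≤ (u * z) ^ 2 * (a' + b') := by positivity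
    rw [abs_div, abs_of_pos (by positivity : 0 < (u + z) ^ 2), div_le_iff₀ (by positivity), abs_le]
    constructor <;> linarith
  · intro y hy
    obtain ⟨h1, h2, h3, h4⟩ := hU y hy
    have p1 : 0 < kden w y := by linarith
    have p2 : 0 < kden v y := by linarith
    have hd := ((kph_deriv w hy.1).sub (kph_deriv v hy.1)).const_mul θ
    refine hd.congr_deriv ?_
    have hl : b - a + (b' - a') * y = kden v y - kden w y := by unfold kden; ring
    rw [hl, hsgn]
    field_simp
    ring

lemma smoothing {g : ℝ → ℝ} {L r m : ℝ} (hg : Measurable g) (hg0 : ∀ x, 0 ≤ g x)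
    (hg1 : ∀ x, g x ≤ 1) (hL0 : 0 ≤ L)
    (hL : ∀ x ∈ Set.Icc (0:ℝ) 2, ∀ y ∈ Set.Icc (0:ℝ) 2, |g x - g y| ≤ L * |x - y|)
    (hr : 0 < r) (hr1 : r ≤ 1) (hm : ∀ x, kmu.real (Set.Icc (x - r) x) ≤ m) :
    ∫ y, g y ∂kmu ≤ m / r * (∫ x in Set.Icc (0:ℝ) 2, g x) + L * r := by
  set ν : Measure ℝ := volume.restrict (Set.Icc (0:ℝ) 2) with hν
  set S : Set (ℝ × ℝ) := {p | p.2 - r ≤ p.1 ∧ p.1 ≤ p.2} with hS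
  have hSm : MeasurableSet S :=
    (measurableSet_le (measurable_snd.sub_const r) measurable_fst).inter
      (measurableSet_le measurable_fst measurable_snd)
  have hgi : ∀ (η : Measure ℝ) [IsFiniteMeasure η], Integrable g η := fun η _ =>
    Integrable.of_bound hg.aestronglyMeasurable 1 (Eventually.of_forall fun x => by
      rw [Real.norm_eq_abs, abs_of_nonneg (hg0 x)]; exact hg1 x)
  set H : ℝ → ℝ → ℝ := fun y x => S.indicator (fun p => g p.2) (y, x) with hH
  have hHi : Integrable (Function.uncurry H) (kmu.prod ν) := by
    refine Integrable.of_bound (C := 1) ?_ (Eventually.of_forall fun p => ?_)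
    · exact ((hg.comp measurable_snd).indicator hSm).aestronglyMeasurable
    · change ‖S.indicator (fun p => g p.2) p‖ ≤ 1
      rw [Set.indicator_apply]
      split_ifs
      · rw [Real.norm_eq_abs, abs_of_nonneg (hg0 _)]; exact hg1 _
      · simp
  have hswap := integral_integral_swap hHi
  have hlow : ∀ᵐ y ∂kmu, r * (g y - L * r) ≤ ∫ x, H y x ∂ν := by
    filter_upwards [kmu_ae] with y hy
    have hsub : Set.Icc y (y + r) ⊆ Set.Icc (0:ℝ) 2 :=
      Set.Icc_subset_Icc (by linarith [hy.1]) (by linarith [hy.2])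
    have h1 : ∫ x, H y x ∂ν = ∫ x in Set.Icc y (y + r), g x := by
      have : H y = (Set.Icc y (y + r)).indicator g := by
        ext x
        simp only [hH, Set.indicator_apply, hS, Set.mem_ofPred_eq, Set.mem_Icc]
        congr 1
        apply propext
        constructor
        · rintro ⟨h1, h2⟩; exact ⟨h2, by linarith⟩
        · rintro ⟨h1, h2⟩; exact ⟨by linarith, h1⟩
      rw [this, integral_indicator measurableSet_Icc, hν, Measure.restrict_restrict
        measurableSet_Icc, Set.inter_eq_left.2 hsub]
    rw [h1]
    have h2 : ∫ x in Set.Icc y (y + r), (g y - L * r) = r * (g y - L * r) := by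
      rw [setIntegral_const, smul_eq_mul, Real.volume_real_Icc_of_le (by linarith)]
      ring
    rw [← h2]
    refine setIntegral_mono_on (integrable_const _) (hgi _) measurableSet_Icc fun x hx => ?_
    have h3 := hL y (hsub ⟨le_rfl, by linarith⟩) x (hsub hx)
    have h4 : |y - x| ≤ r := by rw [abs_le]; constructor <;> linarith [hx.1, hx.2]
    have h5 := le_abs_self (g y - g x)
    nlinarith
  have hup : ∀ x, ∫ y, H y x ∂kmu ≤ m * g x := by
    intro x
    have : (fun y => H y x) = (Set.Icc (x - r) x).indicator (fun _ => g x) := by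
      ext y
      simp only [hH, Set.indicator_apply, hS, Set.mem_ofPred_eq, Set.mem_Icc]
    rw [this, integral_indicator measurableSet_Icc, setIntegral_const, smul_eq_mul]
    exact mul_le_mul_of_nonneg_right (hm x) (hg0 x)
  have h1 : ∫ y, r * (g y - L * r) ∂kmu ≤ ∫ y, (∫ x, H y x ∂ν) ∂kmu :=
    integral_mono_ae (((hgi kmu).sub (integrable_const _)).const_mul r) hHi.integral_prod_left hlow
  have h2 : ∫ x, (∫ y, H y x ∂kmu) ∂ν ≤ ∫ x, m * g x ∂ν :=
    integral_mono hHi.integral_prod_right ((hgi ν).const_mul m) hup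
  rw [hswap] at h1
  have h3 := h1.trans h2
  rw [integral_const_mul, integral_const_mul, integral_sub (hgi kmu) (integrable_const _),
    integral_const, probReal_univ, one_smul] at h3
  have h4 : ∫ y, g y ∂kmu - L * r ≤ m / r * ∫ x, g x ∂ν := by
    rw [div_mul_eq_mul_div, le_div_iff₀ hr]; linarith
  linarith


/-- The exponential sum over a finite family of words. -/
noncomputable def kF (W : Finset (List (Fin 3))) (θ y : ℝ) : ℂ :=
  ∑ v ∈ W, (kP v : ℂ) * Complex.exp (((θ * kph v y : ℝ) : ℂ) * Complex.I)

lemma kF_measurable (W : Finset (List (Fin 3))) (θ : ℝ) : Measurable (kF W θ) := by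
  unfold kF
  refine Finset.measurable_sum _ fun v _ => ?_
  have := measurable_kph v
  fun_prop

lemma kF_norm {W : Finset (List (Fin 3))} (hP : ∑ v ∈ W, kP v ≤ 1) (θ y : ℝ) :
    ‖kF W θ y‖ ≤ 1 := by
  refine le_trans (norm_sum_le _ _) (le_trans (Finset.sum_le_sum fun v _ => ?_) hP)
  rw [norm_mul, Complex.norm_exp_ofReal_mul_I, mul_one, Complex.norm_real, Real.norm_eq_abs,
    abs_of_pos (kP_pos v)]

lemma exp_lip (a b : ℝ) : ‖Complex.exp ((a : ℂ) * Complex.I) - Complex.exp ((b : ℂ) * Complex.I)‖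
    ≤ |a - b| := by
  have h : Complex.exp ((a : ℂ) * Complex.I) - Complex.exp ((b : ℂ) * Complex.I)
      = Complex.exp ((b : ℂ) * Complex.I) * (Complex.exp (Complex.I * ((a - b : ℝ) : ℂ)) - 1) := by
    rw [mul_sub, ← Complex.exp_add, mul_one]
    congr 2
    push_cast; ring
  rw [h, norm_mul, Complex.norm_exp_ofReal_mul_I, one_mul]
  exact Real.norm_exp_I_mul_ofReal_sub_one_le

lemma kF_lip {W : Finset (List (Fin 3))} (hP : ∑ v ∈ W, kP v ≤ 1) {Q θ : ℝ} (hQ : 0 < Q)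
    (hW : ∀ v ∈ W, Q ≤ (kq v).1) {x y : ℝ} (hx : 0 ≤ x) (hy : 0 ≤ y) :
    ‖kF W θ x - kF W θ y‖ ≤ |θ| / Q ^ 2 * |x - y| := by
  unfold kF
  rw [← Finset.sum_sub_distrib]
  have hc : 0 ≤ |θ| / Q ^ 2 * |x - y| := by positivity
  calc _ ≤ ∑ v ∈ W, kP v * (|θ| / Q ^ 2 * |x - y|) := by
        refine le_trans (norm_sum_le _ _) (Finset.sum_le_sum fun v hv => ?_)
        rw [← mul_sub, norm_mul, Complex.norm_real, Real.norm_eq_abs, abs_of_pos (kP_pos v)]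
        refine mul_le_mul_of_nonneg_left ((exp_lip _ _).trans ?_) (kP_pos v).le
        rw [← mul_sub, abs_mul, kph_abs_sub v hx hy]
        have h1 := (hW v hv).trans (kden_ge v hx)
        have h2 := (hW v hv).trans (kden_ge v hy)
        have h3 : Q ^ 2 ≤ kden v x * kden v y := by
          rw [sq]; exact mul_le_mul h1 h2 hQ.le (hQ.le.trans h1)
        calc |θ| * (|x - y| / (kden v x * kden v y)) ≤ |θ| * (|x - y| / Q ^ 2) := by gcongr
          _ = _ := by ring
    _ = (∑ v ∈ W, kP v) * (|θ| / Q ^ 2 * |x - y|) := by rw [Finset.sum_mul]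
    _ ≤ _ := mul_le_of_le_one_left hc hP

lemma kF_l2 {W : Finset (List (Fin 3))} (hP : ∑ v ∈ W, kP v ≤ 1) {Q κ θ M : ℝ} (hQ : 1 ≤ Q)
    (hκ : 0 < κ) (hθ : κ ^ 2 * |θ| = 1764 * Q ^ 3)
    (hW : ∀ v ∈ W, Q ≤ (kq v).1 ∧ ((kq v).1 : ℝ) ≤ 4 * Q)
    (hpar : ∀ v ∈ W, ∀ w ∈ W, w.length % 2 = v.length % 2) (hM0 : 0 ≤ M)
    (hM : ∀ v ∈ W, kP v ≤ M) :
    ∫ y in Set.Icc (0:ℝ) 2, ‖kF W θ y‖ ^ 2 ≤ 2 * M + 10 * κ := by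
  set E : List (Fin 3) → List (Fin 3) → ℝ → ℂ := fun w v y =>
    Complex.exp (((θ * (kph w y - kph v y) : ℝ) : ℂ) * Complex.I) with hE
  have hEi : ∀ w v, Integrable (E w v) (volume.restrict (Set.Icc (0:ℝ) 2)) := by
    intro w v
    refine Integrable.of_bound (C := 1) ?_ (Eventually.of_forall fun y =>
      (Complex.norm_exp_ofReal_mul_I _).le)
    have h1 := measurable_kph v
    have h2 := measurable_kph w
    exact Measurable.aestronglyMeasurable (by fun_prop)
  have hexp : ∀ y, ((‖kF W θ y‖ ^ 2 : ℝ) : ℂ)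
      = ∑ w ∈ W, ∑ v ∈ W, ((kP w * kP v : ℝ) : ℂ) * E w v y := by
    intro y
    push_cast
    rw [← Complex.mul_conj']
    unfold kF
    rw [map_sum, Finset.sum_mul_sum]
    refine Finset.sum_congr rfl fun w _ => Finset.sum_congr rfl fun v _ => ?_
    rw [map_mul, Complex.conj_ofReal, ← Complex.exp_conj, map_mul, Complex.conj_ofReal,
      Complex.conj_I]
    have : E w v y = Complex.exp (((θ * kph w y : ℝ) : ℂ) * Complex.I) *
        Complex.exp (((θ * kph v y : ℝ) : ℂ) * -Complex.I) := by
      rw [← Complex.exp_add]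
      simp only [hE]
      congr 1
      push_cast; ring
    rw [this]
    push_cast; ring
  have h_integ : ((∫ y in Set.Icc (0:ℝ) 2, ‖kF W θ y‖ ^ 2 : ℝ) : ℂ)
      = ∑ w ∈ W, ∑ v ∈ W, ((kP w * kP v : ℝ) : ℂ) * ∫ y in Set.Icc (0:ℝ) 2, E w v y := by
    rw [← integral_complex_ofReal]
    simp_rw [hexp]
    rw [integral_finsetSum]
    · refine Finset.sum_congr rfl fun w _ => ?_
      rw [integral_finsetSum]
      · refine Finset.sum_congr rfl fun v _ => ?_
        rw [integral_const_mul]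
      · exact fun v _ => (hEi w v).const_mul _
    · exact fun w _ => integrable_finsetSum _ fun v _ => (hEi w v).const_mul _
  have hone : ∀ w ∈ W, ∀ v ∈ W, ‖∫ y in Set.Icc (0:ℝ) 2, E w v y‖
      ≤ (if w = v then 2 else 0) + 10 * κ := by
    intro w hw v hv
    rw [integral_Icc_eq_integral_Ioc, ← intervalIntegral.integral_of_le (by norm_num)]
    split_ifs with h
    · have := intervalIntegral.norm_integral_le_of_norm_le_const (a := (0:ℝ)) (b := 2) (C := 1)
        (f := E w v) (fun y _ => (Complex.norm_exp_ofReal_mul_I _).le)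
      norm_num at this
      linarith
    · rw [zero_add]
      exact osc_words hQ hκ hθ (hpar v hv w hw) h (hW w hw) (hW v hv)
  have h0 : 0 ≤ ∫ y in Set.Icc (0:ℝ) 2, ‖kF W θ y‖ ^ 2 :=
    integral_nonneg fun y => by positivity
  have hP0 : 0 ≤ ∑ v ∈ W, kP v := Finset.sum_nonneg fun v _ => (kP_pos v).le
  calc ∫ y in Set.Icc (0:ℝ) 2, ‖kF W θ y‖ ^ 2
      = ‖((∫ y in Set.Icc (0:ℝ) 2, ‖kF W θ y‖ ^ 2 : ℝ) : ℂ)‖ := by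
        rw [Complex.norm_real, Real.norm_eq_abs, abs_of_nonneg h0]
    _ ≤ ∑ w ∈ W, ∑ v ∈ W, kP w * kP v * ((if w = v then 2 else 0) + 10 * κ) := by
        rw [h_integ]
        refine (norm_sum_le _ _).trans (Finset.sum_le_sum fun w hw =>
          (norm_sum_le _ _).trans (Finset.sum_le_sum fun v hv => ?_))
        have hp : 0 < kP w * kP v := mul_pos (kP_pos w) (kP_pos v)
        rw [norm_mul, Complex.norm_real, Real.norm_eq_abs, abs_of_pos hp]
        exact mul_le_mul_of_nonneg_left (hone w hw v hv) hp.le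
    _ = ∑ w ∈ W, kP w * (2 * kP w + 10 * κ * ∑ v ∈ W, kP v) := by
        refine Finset.sum_congr rfl fun w hw => ?_
        have : ∀ v, kP w * kP v * ((if w = v then 2 else 0) + 10 * κ)
            = (if w = v then kP w * kP v * 2 else 0) + kP w * (10 * κ) * kP v := by
          intro v; split_ifs <;> ring
        simp_rw [this]
        rw [Finset.sum_add_distrib, Finset.sum_ite_eq, if_pos hw, ← Finset.mul_sum]
        ring
    _ ≤ ∑ w ∈ W, kP w * (2 * M + 10 * κ) := by
        refine Finset.sum_le_sum fun w hw => mul_le_mul_of_nonneg_left ?_ (kP_pos w).le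
        have := hM w hw
        nlinarith
    _ = (∑ w ∈ W, kP w) * (2 * M + 10 * κ) := by rw [Finset.sum_mul]
    _ ≤ 2 * M + 10 * κ := mul_le_of_le_one_left (by positivity) hP

lemma kF_bound {W : Finset (List (Fin 3))} (hP : ∑ v ∈ W, kP v ≤ 1) {τ θ : ℝ} (hτ : 1 ≤ τ)
    (hθ : |θ| = τ ^ 264)
    (hW : ∀ v ∈ W, τ ^ 48 ≤ ((kq v).1 : ℝ) ∧ ((kq v).1 : ℝ) ≤ 4 * τ ^ 48)
    (hpar : ∀ v ∈ W, ∀ w ∈ W, w.length % 2 = v.length % 2) :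
    ‖∫ y, kF W θ y ∂kmu‖ ≤ 18659 / τ := by
  have hτ0 : 0 < τ := by linarith
  have hM : ∀ v ∈ W, kP v ≤ 2 / τ ^ 64 := by
    intro v hv
    have h1 := kP_bound v
    have h2 : (τ ^ 48) ^ 4 ≤ ((kq v).1 : ℝ) ^ 4 := by
      have := (hW v hv).1
      gcongr
    have hp := kP_pos v
    rw [le_div_iff₀ (by positivity)]
    refine le_of_pow_le_pow_left₀ (n := 3) (by norm_num) (by norm_num) ?_
    calc (kP v * τ ^ 64) ^ 3 = kP v ^ 3 * (τ ^ 48) ^ 4 := by ring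
      _ ≤ kP v ^ 3 * ((kq v).1 : ℝ) ^ 4 := by gcongr
      _ ≤ 2 ^ 3 := by linarith
  have hl2 := kF_l2 hP (Q := τ ^ 48) (κ := 42 / τ ^ 60) (θ := θ) (M := 2 / τ ^ 64)
    (one_le_pow₀ hτ) (by positivity)
    (by rw [hθ]; field_simp; ring) hW hpar (by positivity) hM
  have hl2' : ∫ y in Set.Icc (0:ℝ) 2, ‖kF W θ y‖ ^ 2 ≤ 424 / τ ^ 60 := by
    refine hl2.trans ?_
    calc 2 * (2 / τ ^ 64) + 10 * (42 / τ ^ 60) ≤ 2 * (2 / τ ^ 60) + 10 * (42 / τ ^ 60) := by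
          gcongr
          norm_num
      _ = _ := by ring
  have hn1 : ∀ x, ‖kF W θ x‖ ≤ 1 := kF_norm hP θ
  have hmeas := kF_measurable W θ
  have hs := smoothing (g := fun y => ‖kF W θ y‖ ^ 2) (L := 2 * τ ^ 168) (r := ((τ ^ 57) ^ 3)⁻¹)
    (m := 44 / (τ ^ 57) ^ 2) (by fun_prop) (fun x => by positivity)
    (fun x => pow_le_one₀ (norm_nonneg _) (hn1 x)) (by positivity)
    (fun x hx y hy => by
      have h1 := kF_lip hP (Q := τ ^ 48) (θ := θ) (by positivity) (fun v hv => (hW v hv).1)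
        hx.1 hy.1
      have h2 := abs_norm_sub_norm_le (kF W θ x) (kF W θ y)
      have e : ‖kF W θ x‖ ^ 2 - ‖kF W θ y‖ ^ 2
        = (‖kF W θ x‖ + ‖kF W θ y‖) * (‖kF W θ x‖ - ‖kF W θ y‖) := by ring
      have e2 : |θ| / (τ ^ 48) ^ 2 = τ ^ 168 := by rw [hθ]; field_simp
      rw [e2] at h1
      rw [e, abs_mul, abs_of_nonneg (by positivity), mul_assoc]
      exact mul_le_mul (by linarith [hn1 x, hn1 y]) (h2.trans h1) (abs_nonneg _) (by norm_num))
    (by positivity) (inv_le_one_of_one_le₀ (one_le_pow₀ (one_le_pow₀ hτ)))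
    (fun x => frost (one_le_pow₀ hτ) x)
  have hs' : ∫ y, ‖kF W θ y‖ ^ 2 ∂kmu ≤ 18658 / τ ^ 3 := by
    refine hs.trans ?_
    calc _ ≤ 44 / (τ ^ 57) ^ 2 / ((τ ^ 57) ^ 3)⁻¹ * (424 / τ ^ 60)
          + 2 * τ ^ 168 * ((τ ^ 57) ^ 3)⁻¹ := by gcongr
      _ = 18658 / τ ^ 3 := by field_simp; norm_num
  have hi1 : Integrable (fun y => ‖kF W θ y‖ ^ 2) kmu :=
    Integrable.of_bound (C := 1) (Measurable.aestronglyMeasurable (by fun_prop))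
      (Eventually.of_forall fun x => by
        rw [Real.norm_eq_abs, abs_of_nonneg (by positivity)]
        exact pow_le_one₀ (norm_nonneg _) (hn1 x))
  have hi2 : Integrable (fun y => ‖kF W θ y‖) kmu :=
    Integrable.of_bound (C := 1) (Measurable.aestronglyMeasurable (by fun_prop))
      (Eventually.of_forall fun x => by rw [norm_norm]; exact hn1 x)
  calc ‖∫ y, kF W θ y ∂kmu‖ ≤ ∫ y, ‖kF W θ y‖ ∂kmu := norm_integral_le_integral_norm _
    _ ≤ ∫ y, (τ * ‖kF W θ y‖ ^ 2 + 1 / τ) ∂kmu := by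
        refine integral_mono hi2 ((hi1.const_mul τ).add (integrable_const _)) fun y => ?_
        have h : 0 ≤ (τ * ‖kF W θ y‖ - 1) ^ 2 + τ * ‖kF W θ y‖ := by positivity
        have h3 : τ * ‖kF W θ y‖ ^ 2 + 1 / τ - ‖kF W θ y‖
          = ((τ * ‖kF W θ y‖ - 1) ^ 2 + τ * ‖kF W θ y‖) / τ := by field_simp; ring
        have h4 := div_nonneg h hτ0.le
        simp only
        linarith
    _ = τ * ∫ y, ‖kF W θ y‖ ^ 2 ∂kmu + 1 / τ := by
        rw [integral_add (hi1.const_mul τ) (integrable_const _), integral_const_mul,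
          integral_const, probReal_univ, one_smul]
    _ ≤ τ * (18658 / τ ^ 3) + 1 / τ := by gcongr
    _ = 18658 / τ ^ 2 + 1 / τ := by field_simp
    _ ≤ 18658 / τ + 1 / τ := by
        gcongr
        nlinarith
    _ = 18659 / τ := by ring

lemma kmu_decay {τ θ : ℝ} (hτ : 1 ≤ τ) (hθ : |θ| = τ ^ 264) :
    ‖∫ x, Complex.exp (((θ * x : ℝ) : ℂ) * Complex.I) ∂kmu‖ ≤ 37318 / τ := by
  have h1Q : 1 ≤ τ ^ 48 := one_le_pow₀ hτ
  obtain ⟨n, hn⟩ := exists_nat_ge (2 * τ ^ 48)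
  obtain ⟨W, hW, hWf⟩ := kstopping_family (Q := τ ^ 48) n [] (by simp [kq]; linarith) (by simpa using hn)
  have hP : ∑ v ∈ W, kP v = 1 := by
    have := hWf (fun _ => 1) continuous_const (by simp)
    simp only [integral_const, probReal_univ, one_smul, mul_one] at this
    have h2 : (kP [] : ℝ) = ∑ v ∈ W, kP v := by exact_mod_cast this
    rw [← h2]; simp [kP]
  have hf := hWf (fun x => Complex.exp (((θ * x : ℝ) : ℂ) * Complex.I)) (by fun_prop)
    (fun x => (Complex.norm_exp_ofReal_mul_I _).le)
  simp only [kph_nil] at hf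
  have hnil : kP [] = 1 := by simp [kP]
  rw [hnil, Complex.ofReal_one, one_mul] at hf
  rw [hf]
  have hsum : ∀ V : Finset (List (Fin 3)), ∑ v ∈ V, (kP v : ℂ) *
      ∫ y, Complex.exp (((θ * kph v y : ℝ) : ℂ) * Complex.I) ∂kmu = ∫ y, kF V θ y ∂kmu := by
    intro V
    unfold kF
    rw [integral_finsetSum]
    · simp_rw [integral_const_mul]
    · intro v _
      refine Integrable.const_mul (Integrable.of_bound (C := 1) ?_ (Eventually.of_forall fun y =>
        (Complex.norm_exp_ofReal_mul_I _).le)) _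
      have h1 := measurable_kph v
      exact Measurable.aestronglyMeasurable (by fun_prop)
  have key : ∀ (p : List (Fin 3) → Prop) [DecidablePred p],
      (∀ v w, p v → p w → w.length % 2 = v.length % 2) →
      ‖∑ v ∈ W.filter p, (kP v : ℂ) *
        ∫ y, Complex.exp (((θ * kph v y : ℝ) : ℂ) * Complex.I) ∂kmu‖ ≤ 18659 / τ := by
    intro p _ hp
    rw [hsum]
    refine kF_bound ?_ hτ hθ ?_ ?_
    · rw [← hP]
      exact Finset.sum_le_sum_of_subset_of_nonneg (Finset.filter_subset _ _)
        fun v _ _ => (kP_pos v).le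
    · exact fun v hv => (hW v (Finset.mem_filter.1 hv).1).2
    · exact fun v hv w hw => hp v w (Finset.mem_filter.1 hv).2 (Finset.mem_filter.1 hw).2
  rw [← Finset.sum_filter_add_sum_filter_not W (fun v => v.length % 2 = 0)]
  refine (norm_add_le _ _).trans ?_
  have e : 37318 / τ = 18659 / τ + 18659 / τ := by ring
  rw [e]
  exact add_le_add (key (fun v => v.length % 2 = 0) (fun v w h1 h2 => by omega))
    (key (fun v => ¬ v.length % 2 = 0) (fun v w h1 h2 => by omega))


/-- **Kaufman**: for every `N ≥ 3`, the set `F(N)` of irrationals in `(0,1)` all of whose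
partial quotients are at most `N` carries a Borel probability measure `μ` with power decay of
its Fourier transform: `|μ̂(t)| ≤ c |t|^{-η}` for `|t| ≥ 1`. -/
theorem kaufman_measure (N : ℕ) (hN : 3 ≤ N) :
    ∃ μ : Measure ℝ, IsProbabilityMeasure μ ∧
      μ {x : ℝ | x ∈ Set.Ioo (0 : ℝ) 1 ∧ Irrational x ∧ ∀ i : ℕ, cfa i x ≤ N} = 1 ∧
      ∃ c : ℝ, 0 < c ∧ ∃ η : ℝ, 0 < η ∧
        ∀ t : ℝ, 1 ≤ |t| →
          ‖∫ x, Complex.exp (-(2 * Real.pi * t * x) * Complex.I) ∂μ‖ ≤ c * |t| ^ (-η) := by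
  refine ⟨kmu, inferInstance, kmu_supp N hN, 37318, by norm_num, 1 / 264, by norm_num, ?_⟩
  intro t ht
  have hpi := Real.pi_gt_three
  have hθ1 : |t| ≤ |-(2 * Real.pi * t)| := by
    rw [abs_neg, abs_mul, abs_of_pos (by positivity : 0 < 2 * Real.pi)]
    nlinarith
  set θ : ℝ := -(2 * Real.pi * t) with hθ
  have h0 : 0 < |t| := by linarith
  have hθ0 : 0 < |θ| := by linarith
  have h := kmu_decay (τ := |θ| ^ (1 / 264 : ℝ)) (θ := θ)
    (Real.one_le_rpow (ht.trans hθ1) (by norm_num))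
    (by rw [← Real.rpow_natCast, ← Real.rpow_mul hθ0.le]; norm_num)
  have e : (fun x : ℝ => Complex.exp (-(2 * Real.pi * t * x) * Complex.I))
      = fun x : ℝ => Complex.exp (((θ * x : ℝ) : ℂ) * Complex.I) := by
    funext x
    congr 1
    rw [hθ]
    push_cast
    ring
  rw [e]
  refine h.trans ?_
  rw [div_eq_mul_inv, ← Real.rpow_neg hθ0.le]
  refine mul_le_mul_of_nonneg_left ?_ (by norm_num)
  exact Real.rpow_le_rpow_of_nonpos h0 hθ1 (by norm_num)
end
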